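/- arXiv:1412.6406 — 3 statements merged into one kernel-verified Lean document; each statement's English description precedes it below -/
import Mathlib

section
/- Let b ∈ ℂ, let s_0 > s_1 ≥ 0 and let ε > 0. Then there exists a classical abstract Swiss cheese A = ((a_n, r_n)) with a_0 = a_1 = b, r_0 = s_0, r_1 = s_1 and ∑_{n ≥ 2} r_n < ε, such that R(X_A) is regular. -/
open Metric Set

/-- `R₀(X)`: the restrictions to `X` of rational functions with poles off `X`, i.e. quotients
`p/q` of complex polynomials with `q` nonvanishing on `X`. -/
def R0set (X : Set ℂ) : Set C(X, ℂ) :=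
  {f | ∃ p q : Polynomial ℂ, (∀ x : X, q.eval (x : ℂ) ≠ 0) ∧
    ∀ x : X, f x = p.eval (x : ℂ) / q.eval (x : ℂ)}

/-- `R(X)`: the uniform closure in `C(X, ℂ)` of the rational functions with poles off `X`.
(On the compact space `X` the topology of `C(X, ℂ)` is that of uniform convergence.) -/
noncomputable def Rx (X : Set ℂ) [CompactSpace X] : Subalgebra ℂ C(X, ℂ) :=
  (Algebra.adjoin ℂ (R0set X)).topologicalClosure

/-- A bounded point derivation on `R(X)` at `x`: a continuous linear functional `d` on `R(X)`
satisfying `d(fg) = f(x)d(g) + d(f)g(x)` for all `f, g ∈ R(X)`. -/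
def IsBPD (X : Set ℂ) [CompactSpace X] (x : X) (d : Rx X →L[ℂ] ℂ) : Prop :=
  ∀ f g : Rx X, d (f * g) = (f : C(X, ℂ)) x * d g + d f * (g : C(X, ℂ)) x

/-- `R(X)` is regular: for every closed `E ⊆ X` and `x ∈ X ∖ E` there is `f ∈ R(X)` with
`f(x) = 1` and `f ≡ 0` on `E`. -/
def RxRegular (X : Set ℂ) [CompactSpace X] : Prop :=
  ∀ E : Set X, IsClosed E → ∀ x : X, x ∉ E →
    ∃ f ∈ Rx X, f x = 1 ∧ ∀ y ∈ E, f y = 0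

open Metric Set

/-- An abstract Swiss cheese: a sequence `((a_n, r_n))_{n ≥ 0}` of centres `a n ∈ ℂ` and
non-negative radii `r n ∈ [0, ∞)`. -/
structure SwissCheese where
  a : ℕ → ℂ
  r : ℕ → ℝ
  r_nonneg : ∀ n, 0 ≤ r n

namespace SwissCheese

/-- The associated Swiss cheese set `X_A = closedBall(a₀, r₀) ∖ ⋃_{n ≥ 1} ball(a_n, r_n)`. -/
def cheeseSet (A : SwissCheese) : Set ℂ :=
  closedBall (A.a 0) (A.r 0) \ ⋃ n ∈ Set.Ici 1, ball (A.a n) (A.r n)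

/-- The significant index set `S_A = {n ≥ 1 : r_n > 0}`. -/
def sig (A : SwissCheese) : Set ℕ := {n | 1 ≤ n ∧ 0 < A.r n}

/-- The radius sum `ρ(A) = ∑_{n ≥ 1} r_n` is finite. -/
def RadSummable (A : SwissCheese) : Prop := Summable fun n => A.r (n + 1)

/-- The radius sum `ρ(A) = ∑_{n ≥ 1} r_n`. -/
noncomputable def radSum (A : SwissCheese) : ℝ := ∑' n, A.r (n + 1)

/-- The discrepancy `δ₁(A) = r₀ − ∑_{n ≥ 1} r_n`. -/
noncomputable def disc (A : SwissCheese) : ℝ := A.r 0 - A.radSum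

/-- `A` is classical: `ρ(A) < ∞`, `r₀ > 0`, each significant closed disk is contained in
`ball(a₀, r₀)`, and distinct significant closed disks are disjoint. -/
def IsClassical (A : SwissCheese) : Prop :=
  A.RadSummable ∧ 0 < A.r 0 ∧ ∀ k ∈ A.sig,
    closedBall (A.a k) (A.r k) ⊆ ball (A.a 0) (A.r 0) ∧
    ∀ l ∈ A.sig, l ≠ k → closedBall (A.a k) (A.r k) ∩ closedBall (A.a l) (A.r l) = ∅

/-- `A` is semiclassical: `ρ(A) < ∞`, `r₀ > 0`, each significant open disk is contained in
`ball(a₀, r₀)`, and distinct significant open disks are disjoint. -/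
def IsSemiclassical (A : SwissCheese) : Prop :=
  A.RadSummable ∧ 0 < A.r 0 ∧ ∀ k ∈ A.sig,
    ball (A.a k) (A.r k) ⊆ ball (A.a 0) (A.r 0) ∧
    ∀ l ∈ A.sig, l ≠ k → ball (A.a k) (A.r k) ∩ ball (A.a l) (A.r l) = ∅

/-- `A` is annular: `a₀ = a₁` and `r₀ > r₁ > 0`. -/
def IsAnnular (A : SwissCheese) : Prop := A.a 0 = A.a 1 ∧ A.r 1 < A.r 0 ∧ 0 < A.r 1

/-- The annular radius sum `ρ_ann(A) = ∑_{n ≥ 2} r_n`. -/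
noncomputable def annRadSum (A : SwissCheese) : ℝ := ∑' n, A.r (n + 2)

/-- The annular discrepancy `δ_ann(A) = r₀ − r₁ − 2 ∑_{n ≥ 2} r_n`. -/
noncomputable def annDisc (A : SwissCheese) : ℝ := A.r 0 - A.r 1 - 2 * A.annRadSum

/-- `A` is redundancy-free: every significant open disk meets `closedBall(a₀, r₀)`, and no
significant open disk is contained in another one. -/
def IsRedundancyFree (A : SwissCheese) : Prop :=
  ∀ k ∈ A.sig, (ball (A.a k) (A.r k) ∩ closedBall (A.a 0) (A.r 0)).Nonempty ∧
    ∀ l ∈ A.sig, l ≠ k → ¬ ball (A.a k) (A.r k) ⊆ ball (A.a l) (A.r l)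

/-- `H_A(U)`: the set of significant indices whose closed disk meets `U`. -/
def HSet (A : SwissCheese) (U : Set ℂ) : Set ℕ :=
  {n | n ∈ A.sig ∧ (closedBall (A.a n) (A.r n) ∩ U).Nonempty}

/-- `ρ_U(A) = ∑_{n ∈ H_A(U)} r_n`. -/
noncomputable def rhoU (A : SwissCheese) (U : Set ℂ) : ℝ := ∑' n : A.HSet U, A.r n

/-- The error set `E(A)`. -/
def errorSet (A : SwissCheese) : Set ℂ :=
  (⋃ m ∈ A.sig, ⋃ n ∈ A.sig, ⋃ _ : m ≠ n,
      closedBall (A.a m) (A.r m) ∩ closedBall (A.a n) (A.r n)) ∪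
    ⋃ n ∈ A.sig, (ball (A.a 0) (A.r 0))ᶜ ∩ closedBall (A.a n) (A.r n)

/-- A Swiss cheese set is compact. -/
instance (A : SwissCheese) : CompactSpace A.cheeseSet :=
  isCompact_iff_compactSpace.mp
    ((isCompact_closedBall _ _).diff (isOpen_biUnion fun _ _ => isOpen_ball))

end SwissCheese


open Metric Set

def RA (K : Set ℂ) (f : ℂ → ℂ) : Prop :=
  ∀ η : ℝ, 0 < η → ∃ p q : Polynomial ℂ, (∀ x ∈ K, q.eval x ≠ 0) ∧
    ∀ x ∈ K, ‖f x - p.eval x / q.eval x‖ ≤ η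

theorem RA.mono {K L : Set ℂ} {f : ℂ → ℂ} (h : RA K f) (hL : L ⊆ K) : RA L f := by
  intro η hη
  obtain ⟨p, q, h1, h2⟩ := h η hη
  exact ⟨p, q, fun x hx => h1 x (hL hx), fun x hx => h2 x (hL hx)⟩

theorem RA.one (K : Set ℂ) : RA K (fun _ => 1) := by
  intro η hη
  refine ⟨1, 1, by simp, ?_⟩
  intro x _
  simp [hη.le]

theorem RA.lim {K : Set ℂ} {f : ℂ → ℂ}
    (h : ∀ η : ℝ, 0 < η → ∃ g, RA K g ∧ ∀ x ∈ K, ‖f x - g x‖ ≤ η) : RA K f := by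
  intro η hη
  obtain ⟨g, hg, hfg⟩ := h (η/2) (by positivity)
  obtain ⟨p, q, h1, h2⟩ := hg (η/2) (by positivity)
  refine ⟨p, q, h1, fun x hx => ?_⟩
  calc ‖f x - p.eval x / q.eval x‖ = ‖(f x - g x) + (g x - p.eval x / q.eval x)‖ := by ring_nf
    _ ≤ ‖f x - g x‖ + ‖g x - p.eval x / q.eval x‖ := norm_add_le _ _
    _ ≤ η := by linarith [hfg x hx, h2 x hx]

theorem RA.bdd {K : Set ℂ} (hK : IsCompact K) {f : ℂ → ℂ} (h : RA K f) :
    ∃ M : ℝ, 0 < M ∧ ∀ x ∈ K, ‖f x‖ ≤ M := by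
  obtain ⟨p, q, h1, h2⟩ := h 1 one_pos
  have hc : ContinuousOn (fun x => p.eval x / q.eval x) K :=
    ContinuousOn.div p.continuous.continuousOn q.continuous.continuousOn h1
  obtain ⟨C, hC⟩ := hK.exists_bound_of_continuousOn hc
  refine ⟨|C| + 1, by positivity, fun x hx => ?_⟩
  calc ‖f x‖ = ‖(f x - p.eval x / q.eval x) + p.eval x / q.eval x‖ := by ring_nf
    _ ≤ ‖f x - p.eval x / q.eval x‖ + ‖p.eval x / q.eval x‖ := norm_add_le _ _
    _ ≤ |C| + 1 := by linarith [hC x hx, h2 x hx, le_abs_self C]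

theorem RA.mul {K : Set ℂ} (hK : IsCompact K) {f g : ℂ → ℂ} (hf : RA K f) (hg : RA K g) :
    RA K (fun z => f z * g z) := by
  intro η hη
  obtain ⟨M, hM, hMf⟩ := hf.bdd hK
  obtain ⟨N, hN, hNg⟩ := hg.bdd hK
  obtain ⟨p', q', h1', h2'⟩ := hg (min 1 (η/(2*M))) (by positivity)
  obtain ⟨p, q, h1, h2⟩ := hf (η/(2*(N+1))) (by positivity)
  refine ⟨p * p', q * q', fun x hx => by simp [h1 x hx, h1' x hx], fun x hx => ?_⟩
  set u := p.eval x / q.eval x with hu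
  set v := p'.eval x / q'.eval x with hv
  have e : (p * p').eval x / (q * q').eval x = u * v := by
    simp only [Polynomial.eval_mul, hu, hv]; rw [mul_div_mul_comm]
  rw [e]
  have a1 := h2 x hx
  have a2 := h2' x hx
  have b1 := hMf x hx
  have b2 := hNg x hx
  have hvN : ‖v‖ ≤ N + 1 := by
    calc ‖v‖ = ‖g x - (g x - v)‖ := by ring_nf
      _ ≤ ‖g x‖ + ‖g x - v‖ := norm_sub_le _ _
      _ ≤ N + 1 := by linarith [min_le_left 1 (η/(2*M))]
  calc ‖f x * g x - u * v‖ = ‖f x * (g x - v) + (f x - u) * v‖ := by ring_nf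
    _ ≤ ‖f x‖ * ‖g x - v‖ + ‖f x - u‖ * ‖v‖ := by
        refine (norm_add_le _ _).trans ?_
        rw [norm_mul, norm_mul]
    _ ≤ M * (η/(2*M)) + (η/(2*(N+1))) * (N+1) := by
        gcongr
        exact a2.trans (min_le_right _ _)
    _ = η := by field_simp; ring

theorem RA.hfun {K : Set ℂ} (hK : IsCompact K) (a c : ℂ) (κ : ℝ) (hκ : 0 < κ)
    (h : ∀ z ∈ K, κ ≤ ‖1 - Complex.exp (a * z + c)‖) :
    RA K (fun z => 1 / (1 - Complex.exp (a * z + c))) := by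
  intro η hη
  obtain ⟨M, hM⟩ := hK.exists_bound_of_continuousOn
    (f := fun z => a * z + c) (by fun_prop)
  set ζ := min (κ/2) (η * (κ * (κ/2))) with hζ
  have hζ0 : 0 < ζ := by positivity
  have t1 := FloorSemiring.tendsto_pow_div_factorial_atTop (|M|)
  have t2 : ∀ᶠ n : ℕ in Filter.atTop, |M| ^ n / n.factorial < ζ/2 :=
    t1.eventually (gt_mem_nhds (by positivity))
  obtain ⟨n, hn, hn2⟩ := (t2.and (Filter.eventually_ge_atTop (⌈2 * |M|⌉₊))).exists
  have hn2' : 2 * |M| ≤ n := (Nat.le_ceil _).trans (by exact_mod_cast hn2)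
  set p : Polynomial ℂ := ∑ m ∈ Finset.range n,
    Polynomial.C ((m.factorial : ℂ)⁻¹) * (Polynomial.C a * Polynomial.X + Polynomial.C c) ^ m with hp
  have hpe : ∀ z ∈ K, ‖Complex.exp (a * z + c) - p.eval z‖ ≤ ζ := by
    intro z hz
    have hb : ‖a * z + c‖ ≤ |M| := (hM z hz).trans (le_abs_self _)
    have := Complex.exp_bound' (x := a * z + c) (n := n) (by
      rw [div_le_iff₀ (by positivity)]
      push_cast
      linarith)
    have e : p.eval z = ∑ m ∈ Finset.range n, (a * z + c) ^ m / m.factorial := by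
      simp only [hp, Polynomial.eval_finsetSum]
      refine Finset.sum_congr rfl fun m _ => ?_
      simp; ring
    rw [e]
    refine this.trans ?_
    have : ‖a * z + c‖ ^ n / n.factorial ≤ |M| ^ n / n.factorial := by gcongr
    linarith
  have hq : ∀ z ∈ K, κ / 2 ≤ ‖1 - p.eval z‖ := by
    intro z hz
    have h1 := h z hz
    have h2 := hpe z hz
    have h3 : ‖1 - Complex.exp (a * z + c)‖ ≤ ‖1 - p.eval z‖ + ‖Complex.exp (a * z + c) - p.eval z‖ := by
      calc _ = ‖(1 - p.eval z) - (Complex.exp (a * z + c) - p.eval z)‖ := by ring_nf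
        _ ≤ _ := norm_sub_le _ _
    have := min_le_left (κ/2) (η * (κ * (κ/2)))
    linarith
  refine ⟨1, 1 - p, fun z hz h0 => ?_, fun z hz => ?_⟩
  · have := hq z hz
    rw [Polynomial.eval_sub, Polynomial.eval_one] at h0
    rw [h0] at this; simp at this; linarith
  · have h1 := h z hz
    have h2 := hq z hz
    have n1 : 1 - Complex.exp (a * z + c) ≠ 0 := by
      intro h0; rw [h0] at h1; simp at h1; linarith
    have n2 : 1 - p.eval z ≠ 0 := by
      intro h0; rw [h0] at h2; simp at h2; linarith
    simp only [Polynomial.eval_sub, Polynomial.eval_one]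
    have e : 1 / (1 - Complex.exp (a * z + c)) - 1 / (1 - p.eval z) =
      (Complex.exp (a * z + c) - p.eval z) / ((1 - Complex.exp (a * z + c)) * (1 - p.eval z)) := by
      field_simp; ring
    rw [e, norm_div, norm_mul, div_le_iff₀ (by positivity)]
    calc _ ≤ ζ := hpe z hz
      _ ≤ η * (κ * (κ/2)) := min_le_right _ _
      _ ≤ _ := by gcongr

/-- lower bound for `1 - exp w` away from `2πiℤ` -/
theorem one_sub_exp_lower (κ : ℝ) (hκ : κ ≤ 1/8) (w : ℂ)
    (h : ∀ l : ℤ, 2 * Real.pi * κ ≤ ‖w - l * (2 * Real.pi * Complex.I)‖) :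
    κ ≤ ‖1 - Complex.exp w‖ := by
  by_contra hc
  push Not at hc
  set u : ℂ := Complex.exp w - 1 with hu
  have hun : ‖u‖ < κ := by rw [hu, norm_sub_rev]; exact hc
  have hlog := Complex.norm_log_one_add_half_le_self (z := u) (by linarith)
  have hexp : Complex.exp (Complex.log (1 + u)) = Complex.exp w := by
    rw [Complex.exp_log]
    · simp [hu]
    · simp [hu, Complex.exp_ne_zero]
  obtain ⟨n, hn⟩ := Complex.exp_eq_exp_iff_exists_int.1 hexp.symm
  have := h n
  rw [hn, add_sub_cancel_right] at this
  have hpi := Real.pi_gt_three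
  nlinarith [norm_nonneg u]

theorem hfun_left (w : ℂ) (h : Real.exp w.re ≤ 1/2) :
    ‖1 / (1 - Complex.exp w) - 1‖ ≤ 2 * Real.exp w.re := by
  have h1 : 1 - Real.exp w.re ≤ ‖1 - Complex.exp w‖ := by
    have := norm_sub_norm_le (1:ℂ) (Complex.exp w)
    rwa [norm_one, Complex.norm_exp] at this
  have hpos : 0 < ‖1 - Complex.exp w‖ := by linarith
  have n1 : 1 - Complex.exp w ≠ 0 := norm_pos_iff.1 hpos
  have e : 1 / (1 - Complex.exp w) - 1 = Complex.exp w / (1 - Complex.exp w) := by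
    field_simp; ring
  rw [e, norm_div, Complex.norm_exp, div_le_iff₀ hpos]
  nlinarith [Real.exp_pos w.re]

theorem hfun_right (w : ℂ) (h : Real.exp (-w.re) ≤ 1/2) :
    ‖1 / (1 - Complex.exp w)‖ ≤ 2 * Real.exp (-w.re) := by
  have h1 : Real.exp w.re - 1 ≤ ‖1 - Complex.exp w‖ := by
    have := norm_sub_norm_le (Complex.exp w) (1:ℂ)
    rwa [norm_one, Complex.norm_exp, norm_sub_rev] at this
  have hm : Real.exp w.re * Real.exp (-w.re) = 1 := by rw [← Real.exp_add]; simp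
  have h2 : 2 ≤ Real.exp w.re := by nlinarith [Real.exp_pos w.re]
  have hpos : 0 < ‖1 - Complex.exp w‖ := by linarith
  rw [norm_div, norm_one, div_le_iff₀ hpos]
  nlinarith [Real.exp_pos (-w.re)]

theorem exists_phase (S : Finset ℝ) :
    ∃ β : ℝ, ∀ s ∈ S, ∀ l : ℤ, 1 / (2 * ((S.card : ℝ) + 1)) ≤ |(l:ℝ) + β - s| := by
  by_contra hc
  push Not at hc
  set n := S.card with hn
  have hc' := fun i : ℕ => hc ((i:ℝ) / (n + 1))
  choose s hs l hl using hc'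
  obtain ⟨i, hi, j, hj, hij, he⟩ := Finset.exists_ne_map_eq_of_card_lt_of_maps_to
    (s := Finset.range (n+1)) (t := S) (f := s) (by simp [hn]) (fun i _ => hs i)
  have h1 := hl i
  have h2 := hl j
  rw [he] at h1
  have hpos : (0:ℝ) < n + 1 := by positivity
  have h3 : |((l i:ℝ) - l j) + ((i:ℝ) - j) / (n+1)| < 1 / (n+1) := by
    have e : ((l i:ℝ) - l j) + ((i:ℝ) - j) / (n+1) =
      ((l i : ℝ) + i/(n+1) - s j) - ((l j : ℝ) + j/(n+1) - s j) := by ring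
    rw [e]
    refine (abs_sub _ _).trans_lt ?_
    have : 1 / (2 * ((n:ℝ)+1)) + 1 / (2 * ((n:ℝ)+1)) = 1/(n+1) := by field_simp; norm_num
    linarith
  have h4 : |((l i:ℝ) - l j) * (n+1) + ((i:ℝ) - j)| < 1 := by
    have e : ((l i:ℝ) - l j) * (n+1) + ((i:ℝ) - j) =
      (((l i:ℝ) - l j) + ((i:ℝ) - j) / (n+1)) * (n+1) := by field_simp
    rw [e, abs_mul, abs_of_pos hpos]
    rwa [lt_div_iff₀ hpos] at h3
  have h5 : |(l i - l j) * ((n:ℤ)+1) + ((i:ℤ) - j)| < 1 := by exact_mod_cast h4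
  have h6 : (l i - l j) * ((n:ℤ)+1) + ((i:ℤ) - j) = 0 := Int.abs_lt_one_iff.1 h5
  simp only [Finset.mem_range] at hi hj
  apply hij
  have h7 : ((n:ℤ)+1) ∣ ((i:ℤ) - j) := ⟨-(l i - l j), by linarith⟩
  have h8 := Int.eq_zero_of_abs_lt_dvd h7 (by rw [abs_lt]; constructor <;> omega)
  omega

open Metric Set

noncomputable def pt (d : ℂ) (t β δ : ℝ) (l : ℤ) : ℂ :=
  d⁻¹ * ((t : ℂ) + ((((l:ℝ) + β) * δ : ℝ) : ℂ) * Complex.I)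

def Good (O : Finset (ℂ × ℝ)) (d : ℂ) (lo hi κ : ℝ) : Prop :=
  ∃ δ₀ : ℝ, 0 < δ₀ ∧ ∀ t, lo < t → t < hi → ∀ δ, 0 < δ → δ < δ₀ → ∃ β : ℝ, ∀ l : ℤ, ∀ h ∈ O,
    κ * δ < |dist (pt d t β δ l) h.1 - h.2|

theorem mul_pt {d : ℂ} (hd : ‖d‖ = 1) (t β δ : ℝ) (l : ℤ) :
    d * pt d t β δ l = (t : ℂ) + ((((l:ℝ) + β) * δ : ℝ) : ℂ) * Complex.I := by
  have : d ≠ 0 := by intro h; simp [h] at hd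
  unfold pt; rw [mul_inv_cancel_left₀ this]

theorem dist_eq_mul {d : ℂ} (hd : ‖d‖ = 1) (x y : ℂ) : dist x y = ‖d * x - d * y‖ := by
  rw [← mul_sub, norm_mul, hd, one_mul, dist_eq_norm]

theorem dist_pt_sq {d : ℂ} (hd : ‖d‖ = 1) (t β δ : ℝ) (l : ℤ) (c : ℂ) :
    dist (pt d t β δ l) c ^ 2 = (t - (d * c).re) ^ 2 + (((l:ℝ) + β) * δ - (d * c).im) ^ 2 := by
  rw [dist_eq_mul hd, mul_pt hd, Complex.sq_norm, Complex.normSq_apply]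
  simp only [Complex.sub_re, Complex.sub_im, Complex.add_re, Complex.add_im, Complex.ofReal_re,
    Complex.ofReal_im, Complex.mul_re (_ : ℂ) Complex.I, Complex.mul_im (_ : ℂ) Complex.I,
    Complex.I_re, Complex.I_im]
  ring

theorem finset_pos_lb {α : Type*} (S : Finset α) (f : α → ℝ) (h : ∀ x ∈ S, 0 < f x) :
    ∃ e : ℝ, 0 < e ∧ ∀ x ∈ S, e ≤ f x := by
  classical
  induction S using Finset.induction_on with
  | empty => exact ⟨1, one_pos, by simp⟩
  | insert a S ha ih =>
    obtain ⟨e, he, h'⟩ := ih (fun x hx => h x (Finset.mem_insert_of_mem hx))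
    refine ⟨min e (f a), lt_min he (h a (Finset.mem_insert_self _ _)), ?_⟩
    intro x hx
    rcases Finset.mem_insert.1 hx with rfl | hx
    · exact min_le_right _ _
    · exact (min_le_left _ _).trans (h' x hx)

theorem finset_ub {α : Type*} (S : Finset α) (f : α → ℝ) :
    ∃ e : ℝ, 0 < e ∧ ∀ x ∈ S, f x ≤ e := by
  obtain ⟨M, hM⟩ := (S.image f).bddAbove
  refine ⟨max M 1, by positivity, fun x hx => (hM ?_).trans (le_max_left _ _)⟩
  simpa using ⟨x, hx, rfl⟩

theorem circle_aux (τ R R₀ D u Y m : ℝ) (hτ : 0 < τ) (hR : R ≤ R₀) (hu : |u| ≤ R - τ)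
    (hD0 : 0 ≤ D) (hD : D ^ 2 = u ^ 2 + Y ^ 2) (hm : |D - R| ≤ m) (hm1 : m < 1) :
    |(|Y| - Real.sqrt (R ^ 2 - u ^ 2))| * τ ≤ m * (2 * R₀ + 1) := by
  have ha := abs_nonneg u
  have hR1 : τ ≤ R := by linarith
  have hsq : u ^ 2 ≤ (R - τ) ^ 2 := by
    rw [← sq_abs]; gcongr
  set s := Real.sqrt (R ^ 2 - u ^ 2) with hs
  have hs2 : s ^ 2 = R ^ 2 - u ^ 2 := by
    apply Real.sq_sqrt; nlinarith
  have hs0 : 0 ≤ s := Real.sqrt_nonneg _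
  have hsτ : τ ≤ s := by
    refine abs_le_of_sq_le_sq' ?_ hs0 |>.2
    nlinarith
  have hv0 : 0 ≤ |Y| := abs_nonneg _
  have hv2 : |Y| ^ 2 = Y ^ 2 := sq_abs _
  have hvs : (|Y| - s) * (|Y| + s) = (D - R) * (D + R) := by linarith
  have hm0 : 0 ≤ m := (abs_nonneg _).trans hm
  have hDR : |(D - R) * (D + R)| ≤ m * (2 * R₀ + 1) := by
    rw [abs_mul, abs_of_nonneg (by linarith : 0 ≤ D + R)]
    have := (abs_le.1 hm).2
    exact mul_le_mul hm (by linarith) (by linarith) hm0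
  rw [← hvs, abs_mul, abs_of_nonneg (by linarith : 0 ≤ |Y| + s)] at hDR
  refine le_trans ?_ hDR
  gcongr; linarith

theorem good_exists (O : Finset (ℂ × ℝ)) (hO : ∀ h ∈ O, 0 ≤ h.2) (d : ℂ) (hd : ‖d‖ = 1)
    (a b : ℝ) (hab : a < b) (κm : ℝ) (hκm : 0 < κm) :
    ∃ lo hi κ, a < lo ∧ lo < hi ∧ hi < b ∧ 0 < κ ∧ κ ≤ κm ∧ Good O d lo hi κ := by
  classical
  obtain ⟨t₀, ht₀, hF⟩ := (Ioo_infinite hab).exists_notMem_finset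
    (O.image (fun h => (d * h.1).re + h.2) ∪ O.image (fun h => (d * h.1).re - h.2))
  obtain ⟨τ, hτ, hτO⟩ := finset_pos_lb O (fun h => |(|t₀ - (d * h.1).re| - h.2)| / 2) (by
    intro h hh
    have : |t₀ - (d * h.1).re| - h.2 ≠ 0 := by
      intro h0
      apply hF
      rw [Finset.mem_union, Finset.mem_image, Finset.mem_image]
      rcases abs_cases (t₀ - (d * h.1).re) with ⟨h1, _⟩ | ⟨h1, _⟩
      · left; exact ⟨h, hh, by linarith⟩
      · right; exact ⟨h, hh, by linarith⟩
    positivity)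
  obtain ⟨R₀, hR₀, hR⟩ := finset_ub O (fun h => h.2)
  have hd1 : 0 < t₀ - a := by linarith [ht₀.1]
  have hd2 : 0 < b - t₀ := by linarith [ht₀.2]
  set σ := min τ (min ((t₀ - a)/2) ((b - t₀)/2)) with hσ
  have hσ0 : 0 < σ := by positivity
  have hσ1 : σ ≤ τ := min_le_left _ _
  have hσ2 : σ ≤ (t₀ - a)/2 := (min_le_right _ _).trans (min_le_left _ _)
  have hσ3 : σ ≤ (b - t₀)/2 := (min_le_right _ _).trans (min_le_right _ _)
  set L := (2 * R₀ + 1) / τ with hL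
  have hL0 : 0 < L := by positivity
  set n : ℝ := 2 * (O.card : ℝ) with hn
  have hn0 : 0 ≤ n := by positivity
  set κ := min 1 (min κm (1 / (4 * (n+1) * L))) with hκ
  have hκ0 : 0 < κ := by positivity
  have hκ1 : κ ≤ 1 := min_le_left _ _
  have hκ2 : κ ≤ κm := (min_le_right _ _).trans (min_le_left _ _)
  have hκ3 : κ ≤ 1 / (4 * (n+1) * L) := (min_le_right _ _).trans (min_le_right _ _)
  have hLκ : L * κ < 1 / (2 * (n+1)) := by
    have : L * κ ≤ L * (1 / (4 * (n+1) * L)) := by gcongr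
    have e : L * (1 / (4 * (n+1) * L)) = 1 / (2 * (n+1)) / 2 := by field_simp; norm_num
    have : 0 < 1 / (2 * (n+1)) := by positivity
    linarith
  refine ⟨t₀ - σ, t₀ + σ, κ, by linarith, by linarith, by linarith, hκ0, hκ2, min 1 τ,
    by positivity, ?_⟩
  intro t ht1 ht2 δ hδ hδ0
  have hδ1 : δ < 1 := hδ0.trans_le (min_le_left _ _)
  have hδτ : δ < τ := hδ0.trans_le (min_le_right _ _)
  set s : ℂ × ℝ → ℝ := fun h => Real.sqrt (h.2 ^ 2 - (t - (d * h.1).re) ^ 2) with hs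
  set S : Finset ℝ := O.image (fun h => ((d * h.1).im + s h) / δ) ∪
    O.image (fun h => ((d * h.1).im - s h) / δ) with hS
  obtain ⟨β, hβ⟩ := exists_phase S
  have hcard : (S.card : ℝ) ≤ n := by
    have : S.card ≤ O.card + O.card := (Finset.card_union_le _ _).trans
      (add_le_add Finset.card_image_le Finset.card_image_le)
    rw [hn]
    have : (S.card : ℝ) ≤ O.card + O.card := by exact_mod_cast this
    linarith
  have hmar : 1 / (2 * (n+1)) ≤ 1 / (2 * ((S.card:ℝ)+1)) := by gcongr
  refine ⟨β, fun l h hh => ?_⟩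
  by_contra hcon
  push Not at hcon
  set D := dist (pt d t β δ l) h.1 with hD
  have hDsq := dist_pt_sq hd t β δ l h.1
  rw [← hD] at hDsq
  have hD0 : 0 ≤ D := dist_nonneg
  set y := ((l:ℝ) + β) * δ with hy
  have hκδ : κ * δ < τ := by nlinarith
  have hκδ1 : κ * δ < 1 := by nlinarith
  have h2 := hτO h hh
  have hRh := hR h hh
  have hR0 := hO h hh
  have htt : |(|t - (d * h.1).re| - |t₀ - (d * h.1).re|)| ≤ τ := by
    refine (abs_abs_sub_abs_le_abs_sub _ _).trans ?_
    rw [abs_le]; constructor <;> linarith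
  rw [abs_le] at htt hcon
  have key : h.2 + τ ≤ |t - (d * h.1).re| ∨ |t - (d * h.1).re| ≤ h.2 - τ := by
    rcases abs_cases (|t₀ - (d * h.1).re| - h.2) with ⟨h1, _⟩ | ⟨h1, _⟩
    · left; linarith
    · right; linarith
  rcases key with key | key
  · have : |t - (d * h.1).re| ≤ D := by
      refine abs_le_of_sq_le_sq ?_ hD0
      nlinarith [sq_nonneg (y - (d * h.1).im)]
    linarith
  · set v := |y - (d * h.1).im| with hv
    have hvs2 : |v - s h| * τ ≤ κ * δ * (2 * R₀ + 1) :=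
      circle_aux τ h.2 R₀ D _ _ (κ * δ) hτ hRh key hD0 hDsq (abs_le.2 hcon) hκδ1
    have hvs3 : |v - s h| ≤ L * κ * δ := by
      rw [← le_div_iff₀ hτ] at hvs2
      refine hvs2.trans_eq ?_
      rw [hL]; ring
    have fin : ∀ x : ℝ, x / δ ∈ S → |y - x| ≤ L * κ * δ → False := by
      intro x hx hxy
      have := hβ _ hx l
      have e : (l:ℝ) + β - x / δ = (y - x) / δ := by rw [hy]; field_simp
      rw [e, abs_div, abs_of_pos hδ] at this
      have : |y - x| / δ ≤ L * κ := by rw [div_le_iff₀ hδ]; exact hxy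
      linarith
    rcases abs_cases (y - (d * h.1).im) with ⟨h1, _⟩ | ⟨h1, _⟩
    · refine fin ((d * h.1).im + s h) ?_ ?_
      · rw [hS, Finset.mem_union]; left; exact Finset.mem_image_of_mem _ hh
      · rw [hv, h1] at hvs3; rw [← sub_sub]; exact hvs3
    · refine fin ((d * h.1).im - s h) ?_ ?_
      · rw [hS, Finset.mem_union]; right; exact Finset.mem_image_of_mem _ hh
      · rw [hv, h1] at hvs3
        rw [abs_sub_comm]
        convert hvs3 using 2; ring

theorem fourth_root {u : ℂ} (h : u ^ 4 = 1) : u = 1 ∨ u = -1 ∨ u = Complex.I ∨ u = -Complex.I := by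
  have : (u - 1) * ((u + 1) * ((u - Complex.I) * (u + Complex.I))) = 0 := by
    have := Complex.I_sq
    linear_combination h - (u^2-1) * this
  rcases mul_eq_zero.1 this with h | h
  · left; linear_combination h
  rcases mul_eq_zero.1 h with h | h
  · right; left; linear_combination h
  rcases mul_eq_zero.1 h with h | h
  · right; right; left; linear_combination h
  · right; right; right; linear_combination h

theorem norm_fourth {d : ℂ} (h : d ^ 4 = 1) : ‖d‖ = 1 :=
  Complex.norm_eq_one_of_pow_eq_one h (by norm_num)

theorem proj_grid {d e : ℂ} (hd : d ^ 4 = 1) (he : e ^ 4 = 1) (t β δ : ℝ) :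
    ∃ A : ℝ, ∀ l : ℤ, ∃ k : ℤ, (e * pt d t β δ l).re = A + k * δ := by
  have hu : (e * d⁻¹) ^ 4 = 1 := by rw [mul_pow, inv_pow, hd, he]; simp
  have e1 : ∀ l, e * pt d t β δ l =
    (e * d⁻¹) * ((t : ℂ) + ((((l:ℝ) + β) * δ : ℝ) : ℂ) * Complex.I) := by
    intro l; unfold pt; ring
  simp only [e1]
  rcases fourth_root hu with h | h | h | h <;> simp only [h]
  · exact ⟨t, fun l => ⟨0, by simp⟩⟩
  · exact ⟨-t, fun l => ⟨0, by simp⟩⟩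
  · exact ⟨-β * δ, fun l => ⟨-l, by simp; ring⟩⟩
  · exact ⟨β * δ, fun l => ⟨l, by simp; ring⟩⟩

theorem good_shrink [DecidableEq (ℂ × ℝ)] (O G : Finset (ℂ × ℝ)) {d e : ℂ} (hd : d ^ 4 = 1) (he : e ^ 4 = 1)
    (lo hi κ₀ : ℝ) (hκ₀ : κ₀ ≤ 1) (hG : Good O e lo hi κ₀) (t β δ κ : ℝ) (hδ : 0 < δ)
    (hκ : κ ≤ 1/8) (hlen : 8 * δ < hi - lo)
    (hGG : ∀ g ∈ G, ∃ l, g = (pt d t β δ l, κ * δ)) :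
    ∃ lo' hi', lo < lo' ∧ lo' < hi' ∧ hi' < hi ∧ Good (O ∪ G) e lo' hi' κ₀ := by
  obtain ⟨A, hA⟩ := proj_grid hd he t β δ
  obtain ⟨δ₀, hδ₀, hg⟩ := hG
  set k₀ : ℤ := ⌈(lo - A) / δ⌉ + 1 with hk
  have b1 : (lo - A) ≤ (k₀ - 1) * δ := by
    rw [← div_le_iff₀ hδ, hk]; push_cast; linarith [Int.le_ceil ((lo - A) / δ)]
  have b2 : (k₀ - 2) * δ < lo - A := by
    rw [← lt_div_iff₀ hδ, hk]; push_cast; linarith [Int.ceil_lt_add_one ((lo - A) / δ)]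
  set c := A + (k₀ + 1/2) * δ with hc
  refine ⟨c - δ/8, c + δ/8, by rw [hc]; linarith, by linarith, by rw [hc]; linarith, min δ₀ (δ/4),
    by positivity, ?_⟩
  intro t' h1 h2 δ' hδ' hδ'0
  have hδ'1 := hδ'0.trans_le (min_le_left _ _)
  have hδ'2 := hδ'0.trans_le (min_le_right _ _)
  obtain ⟨β', hβ'⟩ := hg t' (by rw [hc] at h1; linarith) (by rw [hc] at h2; linarith) δ' hδ' hδ'1
  refine ⟨β', fun l h hh => ?_⟩
  rcases Finset.mem_union.1 hh with hh | hh
  · exact hβ' l h hh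
  · obtain ⟨l', rfl⟩ := hGG h hh
    obtain ⟨k, hk'⟩ := hA l'
    simp only
    have hn := norm_fourth he
    have hdist : δ/2 - δ/8 ≤ dist (pt e t' β' δ' l) (pt d t β δ l') := by
      rw [dist_eq_mul hn, mul_pt hn]
      refine le_trans ?_ (Complex.abs_re_le_norm _)
      have e1 : ((t' : ℂ) + ((((l:ℝ) + β') * δ' : ℝ) : ℂ) * Complex.I - e * pt d t β δ l').re
        = t' - (A + k * δ) := by
        rw [Complex.sub_re, hk']; simp
      rw [e1]
      rcases le_or_gt k k₀ with hkk | hkk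
      · have : (k:ℝ) ≤ k₀ := by exact_mod_cast hkk
        refine le_trans ?_ (le_abs_self _)
        nlinarith
      · have : (k₀:ℝ) + 1 ≤ k := by exact_mod_cast hkk
        refine le_trans ?_ (neg_le_abs _)
        nlinarith
    refine lt_of_lt_of_le ?_ (le_abs_self _)
    nlinarith

open Metric Set

def Kset (b : ℂ) (s₀ s₁ : ℝ) (H : Finset (ℂ × ℝ)) : Set ℂ :=
  {z | dist z b ≤ s₀ ∧ s₁ ≤ dist z b ∧ ∀ h ∈ H, h.2 ≤ dist z h.1}

theorem Kset_compact (b : ℂ) (s₀ s₁ : ℝ) (H : Finset (ℂ × ℝ)) : IsCompact (Kset b s₀ s₁ H) := by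
  have : Kset b s₀ s₁ H = closedBall b s₀ ∩ ({z | s₁ ≤ dist z b} ∩ ⋂ h ∈ H, {z | h.2 ≤ dist z h.1}) := by
    ext z; simp [Kset]
  rw [this]
  refine (isCompact_closedBall b s₀).inter_right (IsClosed.inter ?_ ?_)
  · exact isClosed_le continuous_const (by fun_prop)
  · exact isClosed_biInter fun h _ => isClosed_le continuous_const (by fun_prop)

theorem Kset_mono {b : ℂ} {s₀ s₁ : ℝ} {H H' : Finset (ℂ × ℝ)} (h : H ⊆ H') :
    Kset b s₀ s₁ H' ⊆ Kset b s₀ s₁ H :=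
  fun _ hz => ⟨hz.1, hz.2.1, fun g hg => hz.2.2 g (h hg)⟩

noncomputable def obst (b : ℂ) (s₀ s₁ : ℝ) (H : Finset (ℂ × ℝ)) : Finset (ℂ × ℝ) := by
  classical exact {(b, s₀), (b, s₁)} ∪ H

structure HOK (b : ℂ) (s₀ s₁ : ℝ) (H : Finset (ℂ × ℝ)) : Prop where
  pos : ∀ h ∈ H, 0 < h.2
  inB : ∀ h ∈ H, dist h.1 b + h.2 < s₀
  out : ∀ h ∈ H, s₁ + h.2 < dist h.1 b
  disj : ∀ h ∈ H, ∀ h' ∈ H, h ≠ h' → h.2 + h'.2 < dist h.1 h'.1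

theorem dist_pt_pt {d : ℂ} (hd : ‖d‖ = 1) (t β δ : ℝ) (hδ : 0 < δ) (l l' : ℤ) (h : l ≠ l') :
    δ ≤ dist (pt d t β δ l) (pt d t β δ l') := by
  rw [dist_eq_mul hd, mul_pt hd, mul_pt hd]
  have e : (t : ℂ) + ((((l:ℝ) + β) * δ : ℝ) : ℂ) * Complex.I -
      ((t : ℂ) + ((((l':ℝ) + β) * δ : ℝ) : ℂ) * Complex.I) = (((l - l' : ℤ) : ℝ) * δ : ℝ) * Complex.I := by
    push_cast; ring
  rw [e, norm_mul, Complex.norm_I, mul_one, Complex.norm_real, norm_mul, Real.norm_eq_abs,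
    Real.norm_eq_abs, abs_of_pos hδ]
  have : (1:ℝ) ≤ |((l - l' : ℤ) : ℝ)| := by
    have : 1 ≤ |l - l'| := Int.one_le_abs (sub_ne_zero.2 h)
    exact_mod_cast this
  nlinarith

theorem new_holes [DecidableEq (ℂ × ℝ)] (b : ℂ) (s₀ s₁ : ℝ) (hs₁ : 0 ≤ s₁) (hs : s₁ < s₀)
    (H : Finset (ℂ × ℝ)) (hH : HOK b s₀ s₁ H)
    {d : ℂ} (hd : ‖d‖ = 1) (t β δ κ : ℝ) (hδ : 0 < δ) (hδ1 : δ ≤ 1) (hκ : 0 < κ) (hκ1 : κ ≤ 1/8)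
    (hg : ∀ l : ℤ, ∀ h ∈ obst b s₀ s₁ H, κ * δ < |dist (pt d t β δ l) h.1 - h.2|) :
    ∃ G : Finset (ℂ × ℝ), (∀ g ∈ G, ∃ l, g = (pt d t β δ l, κ * δ)) ∧ HOK b s₀ s₁ (H ∪ G) ∧
      ∑ h ∈ H ∪ G, h.2 ≤ ∑ h ∈ H, h.2 + (2 * s₀ + 1) * κ ∧
      ∀ z ∈ Kset b s₀ s₁ (H ∪ G), ∀ l : ℤ, κ * δ ≤ dist z (pt d t β δ l) := by
  classical
  have hκδ : 0 < κ * δ := by positivity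
  set y₀ := (d * b).im with hy₀
  set I : Finset ℤ := Finset.Icc ⌈(y₀ - s₀) / δ - β⌉ ⌊(y₀ + s₀) / δ - β⌋ with hI
  set T : Finset ℤ := I.filter (fun l => pt d t β δ l ∈ Kset b s₀ s₁ H) with hT
  have memT : ∀ l, pt d t β δ l ∈ Kset b s₀ s₁ H → l ∈ T := by
    intro l hl
    rw [hT, Finset.mem_filter]
    refine ⟨?_, hl⟩
    have h1 := hl.1
    have hsq := dist_pt_sq hd t β δ l b
    have h2 : |((l:ℝ) + β) * δ - y₀| ≤ s₀ := by
      refine le_trans ?_ h1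
      refine abs_le_of_sq_le_sq ?_ dist_nonneg
      rw [hsq]; nlinarith [sq_nonneg (t - (d * b).re)]
    rw [abs_le] at h2
    rw [hI, Finset.mem_Icc, Int.ceil_le, Int.le_floor, sub_le_iff_le_add, le_sub_iff_add_le,
      div_le_iff₀ hδ, le_div_iff₀ hδ]
    constructor <;> linarith
  have hcard : (T.card : ℝ) * δ ≤ 2 * s₀ + 1 := by
    have h1 : T.card ≤ I.card := Finset.card_filter_le _ _
    have h2 : (I.card : ℝ) ≤ 2 * s₀ / δ + 1 := by
      rw [hI, Int.card_Icc]
      rcases le_or_gt 0 (⌊(y₀ + s₀) / δ - β⌋ + 1 - ⌈(y₀ - s₀) / δ - β⌉) with h | h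
      · have : (((⌊(y₀ + s₀) / δ - β⌋ + 1 - ⌈(y₀ - s₀) / δ - β⌉).toNat : ℤ) : ℝ) =
          ((⌊(y₀ + s₀) / δ - β⌋ + 1 - ⌈(y₀ - s₀) / δ - β⌉ : ℤ) : ℝ) := by rw [Int.toNat_of_nonneg h]
        rw [Int.cast_natCast] at this
        rw [this]
        push_cast
        have a1 := Int.floor_le ((y₀ + s₀) / δ - β)
        have a2 := Int.le_ceil ((y₀ - s₀) / δ - β)
        have : (y₀ + s₀) / δ - (y₀ - s₀) / δ = 2 * s₀ / δ := by ring
        linarith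
      · rw [Int.toNat_of_nonpos h.le]
        have : 0 < s₀ := by linarith
        push_cast; positivity
    have h3 : (T.card : ℝ) ≤ 2 * s₀ / δ + 1 := le_trans (by exact_mod_cast h1) h2
    calc (T.card : ℝ) * δ ≤ (2 * s₀ / δ + 1) * δ := by gcongr
      _ = 2 * s₀ + δ := by field_simp
      _ ≤ _ := by linarith
  set G : Finset (ℂ × ℝ) := T.image (fun l => (pt d t β δ l, κ * δ)) with hG
  have memG : ∀ g ∈ G, ∃ l, pt d t β δ l ∈ Kset b s₀ s₁ H ∧ g = (pt d t β δ l, κ * δ) := by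
    intro g hg'
    rw [hG, Finset.mem_image] at hg'
    obtain ⟨l, hl, rfl⟩ := hg'
    exact ⟨l, (Finset.mem_filter.1 hl).2, rfl⟩
  have hob0 : (b, s₀) ∈ obst b s₀ s₁ H := by simp [obst]
  have hob1 : (b, s₁) ∈ obst b s₀ s₁ H := by simp [obst]
  have hobH : ∀ h ∈ H, h ∈ obst b s₀ s₁ H := by intro h hh; simp [obst, hh]
  have crossd : ∀ l, pt d t β δ l ∈ Kset b s₀ s₁ H → ∀ h ∈ H,
      h.2 + κ * δ < dist (pt d t β δ l) h.1 := by
    intro l hl h hh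
    have := hg l h (hobH h hh)
    rw [abs_of_nonneg (by linarith [hl.2.2 h hh])] at this
    linarith
  refine ⟨G, fun g hg' => ?_, ⟨?_, ?_, ?_, ?_⟩, ?_, ?_⟩
  · obtain ⟨l, _, h⟩ := memG g hg'; exact ⟨l, h⟩
  · intro h hh
    rcases Finset.mem_union.1 hh with hh | hh
    · exact hH.pos h hh
    · obtain ⟨l, _, rfl⟩ := memG h hh; exact hκδ
  · intro h hh
    rcases Finset.mem_union.1 hh with hh | hh
    · exact hH.inB h hh
    · obtain ⟨l, hl, rfl⟩ := memG h hh
      have := hg l _ hob0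
      have h1 := hl.1
      simp only at this ⊢
      rw [abs_of_nonpos (by linarith)] at this
      linarith
  · intro h hh
    rcases Finset.mem_union.1 hh with hh | hh
    · exact hH.out h hh
    · obtain ⟨l, hl, rfl⟩ := memG h hh
      have := hg l _ hob1
      have h1 := hl.2.1
      simp only at this ⊢
      rw [abs_of_nonneg (by linarith)] at this
      linarith
  · intro h hh h' hh' hne
    rcases Finset.mem_union.1 hh with hh | hh <;> rcases Finset.mem_union.1 hh' with hh' | hh'
    · exact hH.disj h hh h' hh' hne
    · obtain ⟨l, hl, rfl⟩ := memG h' hh'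
      have := crossd l hl h hh
      rw [dist_comm]; exact this
    · obtain ⟨l, hl, rfl⟩ := memG h hh
      have := crossd l hl h' hh'
      simp only; linarith
    · obtain ⟨l, hl, rfl⟩ := memG h hh
      obtain ⟨l', hl', rfl⟩ := memG h' hh'
      have hll : l ≠ l' := by rintro rfl; exact hne rfl
      have := dist_pt_pt hd t β δ hδ l l' hll
      simp only; nlinarith
  · have hsum : ∑ h ∈ H ∪ G, h.2 ≤ ∑ h ∈ H, h.2 + ∑ h ∈ G, h.2 := by
      rw [← Finset.sum_union_inter]
      have : 0 ≤ ∑ h ∈ H ∩ G, h.2 :=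
        Finset.sum_nonneg fun h hh => (hH.pos h (Finset.mem_inter.1 hh).1).le
      linarith
    have hG2 : ∑ h ∈ G, h.2 ≤ G.card * (κ * δ) := by
      rw [← nsmul_eq_mul]
      refine Finset.sum_le_card_nsmul _ _ _ fun h hh => ?_
      obtain ⟨l, _, rfl⟩ := memG h hh
      exact le_rfl
    have hGT : (G.card : ℝ) ≤ T.card := by exact_mod_cast Finset.card_image_le
    have : (G.card : ℝ) * (κ * δ) ≤ (T.card * δ) * κ := by
      calc _ ≤ (T.card : ℝ) * (κ * δ) := by gcongr
        _ = _ := by ring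
    nlinarith
  · intro z hz l
    by_cases hl : pt d t β δ l ∈ Kset b s₀ s₁ H
    · have := hz.2.2 (pt d t β δ l, κ * δ) (Finset.mem_union_right _ (by
        rw [hG]; exact Finset.mem_image_of_mem _ (memT l hl)))
      exact this
    · have tri1 := dist_triangle_left (pt d t β δ l) b z
      by_cases c0 : dist (pt d t β δ l) b ≤ s₀
      · by_cases c1 : s₁ ≤ dist (pt d t β δ l) b
        · have : ∃ h ∈ H, dist (pt d t β δ l) h.1 < h.2 := by
            by_contra hc
            push Not at hc
            exact hl ⟨c0, c1, hc⟩
          obtain ⟨h, hh, hlt⟩ := this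
          have h1 := hg l h (hobH h hh)
          rw [abs_of_neg (by linarith)] at h1
          have h2 := hz.2.2 h (Finset.mem_union_left _ hh)
          have := dist_triangle z (pt d t β δ l) h.1
          linarith
        · push Not at c1
          have h1 := hg l _ hob1
          simp only at h1
          rw [abs_of_neg (by linarith)] at h1
          have h2 := hz.2.1
          have := dist_triangle z (pt d t β δ l) b
          linarith
      · push Not at c0
        have h1 := hg l _ hob0
        simp only at h1
        rw [abs_of_pos (by linarith)] at h1
        have h2 := hz.1
        linarith

theorem factor {K : Set ℂ} (hK : IsCompact K) {d : ℂ} (hd : ‖d‖ = 1) (t β δ κ : ℝ) (hδ : 0 < δ)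
    (hκ : 0 < κ) (hκ1 : κ ≤ 1/8) (h : ∀ z ∈ K, ∀ l : ℤ, κ * δ ≤ dist z (pt d t β δ l)) :
    ∃ f : ℂ → ℂ, RA K f ∧ (∀ z ∈ K, ‖f z‖ ≤ 1/κ) ∧
      (∀ z x, (d * z).re ≤ t - x → Real.exp (-(2 * Real.pi / δ * x)) ≤ 1/2 →
        ‖f z - 1‖ ≤ 2 * Real.exp (-(2 * Real.pi / δ * x))) ∧
      (∀ z x, t + x ≤ (d * z).re → Real.exp (-(2 * Real.pi / δ * x)) ≤ 1/2 →
        ‖f z‖ ≤ 2 * Real.exp (-(2 * Real.pi / δ * x))) := by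
  have hpi := Real.pi_pos
  set m : ℝ := 2 * Real.pi / δ with hm
  have hm0 : 0 < m := by positivity
  have hmδ : m * δ = 2 * Real.pi := by rw [hm]; field_simp
  set a : ℂ := m * d with ha
  set c : ℂ := -(m * (t + (β * δ : ℝ) * Complex.I)) with hc
  have hre : ∀ z, (a * z + c).re = m * ((d * z).re - t) := by
    intro z
    have : a * z + c = (m:ℂ) * (d * z - (t + (β * δ : ℝ) * Complex.I)) := by rw [ha, hc]; ring
    rw [this, Complex.re_ofReal_mul, Complex.sub_re, Complex.add_re]
    simp
  have hlow : ∀ z ∈ K, κ ≤ ‖1 - Complex.exp (a * z + c)‖ := by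
    intro z hz
    refine one_sub_exp_lower κ hκ1 _ fun l => ?_
    have e : a * z + c - l * (2 * Real.pi * Complex.I) = (m:ℂ) * (d * z - d * pt d t β δ l) := by
      have : ((2 * Real.pi : ℝ) : ℂ) = (m * δ : ℝ) := by rw [hmδ]
      push_cast at this
      rw [mul_pt hd, this, ha, hc]; push_cast; ring
    rw [e, norm_mul, ← dist_eq_mul hd, Complex.norm_real, Real.norm_eq_abs, abs_of_pos hm0]
    have := h z hz l
    calc 2 * Real.pi * κ = m * (κ * δ) := by rw [← hmδ]; ring
      _ ≤ _ := by gcongr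
  refine ⟨_, RA.hfun hK a c κ hκ hlow, ?_, ?_, ?_⟩
  · intro z hz
    rw [norm_div, norm_one]
    exact one_div_le_one_div_of_le hκ (hlow z hz)
  · intro z x hx he
    have : Real.exp (a * z + c).re ≤ Real.exp (-(m * x)) := by
      rw [hre]; apply Real.exp_le_exp.2; nlinarith
    exact (hfun_left _ (this.trans he)).trans (by linarith)
  · intro z x hx he
    have : Real.exp (-(a * z + c).re) ≤ Real.exp (-(m * x)) := by
      rw [hre]; apply Real.exp_le_exp.2; nlinarith
    exact (hfun_right _ (this.trans he)).trans (by linarith)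

theorem ev_exp (x η : ℝ) (hx : 0 < x) (hη : 0 < η) :
    ∀ᶠ δ : ℝ in nhdsWithin 0 (Ioi 0), Real.exp (-(2 * Real.pi / δ * x)) ≤ η := by
  have h1 : Filter.Tendsto (fun δ : ℝ => 2 * Real.pi / δ * x) (nhdsWithin 0 (Ioi 0)) Filter.atTop := by
    have := (tendsto_inv_nhdsGT_zero (𝕜 := ℝ)).const_mul_atTop (by positivity : 0 < 2 * Real.pi * x)
    refine this.congr fun δ => ?_
    ring
  have h2 := Real.tendsto_exp_neg_atTop_nhds_zero.comp h1
  exact (h2.eventually (gt_mem_nhds hη)).mono fun _ h => h.le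

open Metric Set

structure STask where
  d : ℂ
  q : ℝ
  q' : ℝ
  hd : d ^ 4 = 1
  hq : q < q'

structure SData where
  P : ℂ → ℂ
  lo : ℝ
  hi : ℝ
  κ : ℝ
  e : ℝ

structure TaskInv (b : ℂ) (s₀ s₁ : ℝ) (H : Finset (ℂ × ℝ)) (T : STask) (D : SData) : Prop where
  qlo : T.q < D.lo
  lohi : D.lo < D.hi
  hiq : D.hi < T.q'
  κpos : 0 < D.κ
  κle : D.κ ≤ 1/8
  good : Good (obst b s₀ s₁ H) T.d D.lo D.hi D.κ
  ra : RA (Kset b s₀ s₁ H) D.P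
  epos : 0 < D.e
  bound : ∀ z ∈ Kset b s₀ s₁ H, D.lo ≤ (T.d * z).re → ‖D.P z‖ * (1 + 1 / D.κ) ≤ D.e
  left : ∃ g : ℝ, g < 1/2 ∧ ∀ z ∈ Kset b s₀ s₁ H, (T.d * z).re ≤ T.q → ‖D.P z - 1‖ ≤ g

structure SInv (b : ℂ) (s₀ s₁ ε : ℝ) (T : ℕ → STask) (N : ℕ) (H : Finset (ℂ × ℝ)) (D : ℕ → SData) :
    Prop where
  hok : HOK b s₀ s₁ H
  budget : ∑ h ∈ H, h.2 + ∑ n ∈ Finset.range N, (2 * s₀ + 1) * (D n).κ < ε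
  task : ∀ n < N, TaskInv b s₀ s₁ H (T n) (D n)

theorem obst_nonneg {b : ℂ} {s₀ s₁ : ℝ} (hs₁ : 0 ≤ s₁) (hs : s₁ < s₀)
    {H : Finset (ℂ × ℝ)} (hH : HOK b s₀ s₁ H) : ∀ h ∈ obst b s₀ s₁ H, 0 ≤ h.2 := by
  classical
  intro h hh
  simp only [obst, Finset.mem_union, Finset.mem_insert, Finset.mem_singleton] at hh
  rcases hh with (rfl | rfl) | hh
  · exact hs₁.trans hs.le
  · exact hs₁
  · exact (hH.pos h hh).le

theorem activate {b : ℂ} {s₀ s₁ ε : ℝ} (hs₁ : 0 ≤ s₁) (hs : s₁ < s₀) {T : ℕ → STask} {N : ℕ}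
    {H : Finset (ℂ × ℝ)} {D : ℕ → SData} (hI : SInv b s₀ s₁ ε T N H D) :
    ∃ D' : ℕ → SData, SInv b s₀ s₁ ε T (N+1) H D' ∧ ∀ n < N, D' n = D n := by
  have hC : 0 < 2 * s₀ + 1 := by linarith
  set sl := ε - (∑ h ∈ H, h.2 + ∑ n ∈ Finset.range N, (2 * s₀ + 1) * (D n).κ) with hsl
  have hsl0 : 0 < sl := by linarith [hI.budget]
  obtain ⟨lo, hi, κ, h1, h2, h3, h4, h5, h6⟩ := good_exists (obst b s₀ s₁ H)
    (obst_nonneg hs₁ hs hI.hok) (T N).d (norm_fourth (T N).hd) (T N).q (T N).q' (T N).hq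
    (min (1/8) (sl / (2 * (2 * s₀ + 1)))) (by positivity)
  have hκ : (2 * s₀ + 1) * κ ≤ sl / 2 := by
    have := h5.trans (min_le_right _ _)
    rw [le_div_iff₀ (by positivity)] at this
    linarith
  refine ⟨Function.update D N ⟨fun _ => 1, lo, hi, κ, 1 + 1/κ⟩, ⟨hI.hok, ?_, ?_⟩, ?_⟩
  · rw [Finset.sum_range_succ, Function.update_self]
    have : ∑ n ∈ Finset.range N, (2 * s₀ + 1) * (Function.update D N ⟨fun _ => 1, lo, hi, κ, 1 + 1/κ⟩ n).κ
      = ∑ n ∈ Finset.range N, (2 * s₀ + 1) * (D n).κ := by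
      refine Finset.sum_congr rfl fun n hn => ?_
      rw [Function.update_of_ne (Finset.mem_range.1 hn).ne]
    rw [this]
    simp only
    linarith
  · intro n hn
    rcases Nat.lt_succ_iff_lt_or_eq.1 hn with hn | rfl
    · rw [Function.update_of_ne hn.ne]; exact hI.task n hn
    · rw [Function.update_self]
      exact ⟨h1, h2, h3, h4, h5.trans (min_le_left _ _), h6, RA.one _, by positivity,
        fun z _ _ => by simp, 0, by norm_num, fun z _ _ => by simp⟩
  · intro n hn
    rw [Function.update_of_ne hn.ne]

theorem process {b : ℂ} {s₀ s₁ ε : ℝ} (hs₁ : 0 ≤ s₁) (hs : s₁ < s₀) {T : ℕ → STask} {N : ℕ}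
    {H : Finset (ℂ × ℝ)} {D : ℕ → SData} (hI : SInv b s₀ s₁ ε T N H D) (n : ℕ) (hn : n < N)
    (η : ℝ) (hη : 0 < η) :
    ∃ (H' : Finset (ℂ × ℝ)) (D' : ℕ → SData), SInv b s₀ s₁ ε T N H' D' ∧ H ⊆ H' ∧
      (∀ j < N, (D' j).e ≤ (D j).e ∧
        ∀ z ∈ Kset b s₀ s₁ H', ‖(D' j).P z - (D j).P z‖ ≤ 2 * ((D j).e - (D' j).e)) ∧
      (D' n).e ≤ η := by
  classical
  have hC : 0 < 2 * s₀ + 1 := by linarith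
  set sl := ε - (∑ h ∈ H, h.2 + ∑ n ∈ Finset.range N, (2 * s₀ + 1) * (D n).κ) with hsl
  have hsl0 : 0 < sl := by linarith [hI.budget]
  have hT := hI.task n hn
  obtain ⟨P, lo, hi, κ, e, hDn⟩ : ∃ P lo hi κ e, D n = ⟨P, lo, hi, κ, e⟩ := ⟨_, _, _, _, _, rfl⟩
  rw [hDn] at hT
  obtain ⟨qlo, lohi, hiq, κpos, κle, good, ra, epos, bound, g, hg, left⟩ := hT
  simp only at qlo lohi hiq κpos κle good ra epos bound left
  have hd := norm_fourth (T n).hd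
  set t := lo + (hi - lo) / 3 with ht
  obtain ⟨lo', hi', κ', h1, h2, h3, h4, h5, h6⟩ := good_exists (obst b s₀ s₁ H)
    (obst_nonneg hs₁ hs hI.hok) (T n).d hd (lo + 2 * (hi - lo) / 3) hi (by linarith)
    (min (1/8) (sl / (2 * (2 * s₀ + 1)))) (by positivity)
  have hκ'b : (2 * s₀ + 1) * κ' ≤ sl / 2 := by
    have := h5.trans (min_le_right _ _)
    rw [le_div_iff₀ (by positivity)] at this
    linarith
  have hκ'8 : κ' ≤ 1/8 := h5.trans (min_le_left _ _)
  obtain ⟨M, hM, hMP⟩ := ra.bdd (Kset_compact b s₀ s₁ H)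
  set e' := min (e/2) η with he'
  have he'0 : 0 < e' := by positivity
  set x₁ := t - lo with hx₁
  set x₂ := lo' - t with hx₂
  have hx₁0 : 0 < x₁ := by rw [hx₁, ht]; linarith
  have hx₂0 : 0 < x₂ := by rw [hx₂, ht]; linarith
  have hg0 : 0 < 1/2 - g := by linarith
  set η₁ := min (1/2) (min (e / (2 * M)) ((1/2 - g) / (4 * M))) with hη₁
  have hη₁0 : 0 < η₁ := by positivity
  set η₂ := min (1/2) (e' / (2 * M * (1 + 1/κ'))) with hη₂
  have hη₂0 : 0 < η₂ := by positivity
  obtain ⟨δ₀, hδ₀, hgood⟩ := good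
  obtain ⟨lm, hlm, hlm2⟩ := finset_pos_lb (Finset.range N) (fun j => (D j).hi - (D j).lo)
    (fun j hj => by linarith [(hI.task j (Finset.mem_range.1 hj)).lohi])
  have evδ : ∀ᶠ δ : ℝ in nhdsWithin 0 (Ioi 0), δ < min (min δ₀ 1) (min (lm / 8) ((hi' - lo')/8)) := by
    have : 0 < hi' - lo' := by linarith
    have h0 : (0:ℝ) < min (min δ₀ 1) (min (lm / 8) ((hi' - lo')/8)) := by positivity
    exact nhdsWithin_le_nhds (gt_mem_nhds h0)
  obtain ⟨δ, ⟨⟨hδs, hδ1⟩, hδ2⟩, hδpos⟩ := (((evδ.and (ev_exp x₁ η₁ hx₁0 hη₁0)).and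
    (ev_exp x₂ η₂ hx₂0 hη₂0)).and self_mem_nhdsWithin).exists
  rw [lt_min_iff, lt_min_iff, lt_min_iff] at hδs
  obtain ⟨⟨hδa, hδb⟩, hδc, hδd⟩ := hδs
  obtain ⟨β, hβ⟩ := hgood t (by linarith) (by linarith) δ hδpos hδa
  obtain ⟨G, hG1, hG2, hG3, hG4⟩ := new_holes b s₀ s₁ hs₁ hs H hI.hok hd t β δ κ hδpos hδb.le κpos κle hβ
  obtain ⟨f, hf1, hf2, hf3, hf4⟩ := factor (Kset_compact b s₀ s₁ (H ∪ G)) hd t β δ κ hδpos κpos κle hG4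
  have hob : obst b s₀ s₁ (H ∪ G) = obst b s₀ s₁ H ∪ G := by
    unfold obst; ext; simp [or_assoc]
  have hKm : Kset b s₀ s₁ (H ∪ G) ⊆ Kset b s₀ s₁ H := Kset_mono Finset.subset_union_left
  -- windows for all tasks
  have hw : ∀ j, ∃ lo'' hi'', j < N → (D j).lo < lo'' ∧ lo'' < hi'' ∧ hi'' < (D j).hi ∧
      Good (obst b s₀ s₁ (H ∪ G)) (T j).d lo'' hi'' (D j).κ := by
    intro j
    by_cases hj : j < N
    · have tj := hI.task j hj
      have := hlm2 j (Finset.mem_range.2 hj)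
      obtain ⟨a, c, h⟩ := good_shrink _ G (T n).hd (T j).hd _ _ _ (by linarith [tj.κle]) tj.good
        t β δ κ hδpos κle (by linarith) hG1
      exact ⟨a, c, fun _ => by rw [hob]; exact h⟩
    · exact ⟨0, 0, fun h => absurd h hj⟩
  choose wl wh hw using hw
  obtain ⟨nl, nh, hn1, hn2, hn3, hn4⟩ := good_shrink _ G (T n).hd (T n).hd _ _ _ (by linarith) h6
        t β δ κ hδpos κle (by linarith) hG1
  rw [← hob] at hn4
  set D₁ : ℕ → SData := fun j => ⟨(D j).P, wl j, wh j, (D j).κ, (D j).e⟩ with hD₁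
  set D' : ℕ → SData := Function.update D₁ n ⟨fun z => P z * f z, nl, nh, κ', e'⟩ with hD'
  have hee : e' ≤ e / 2 := min_le_left _ _
  have hstep : ∀ z ∈ Kset b s₀ s₁ (H ∪ G), ((T n).d * z).re ≤ lo →
      ‖P z * f z - P z‖ ≤ M * (2 * η₁) := by
    intro z hz hzl
    have := hf3 z x₁ (by rw [hx₁]; linarith) (hδ1.trans (min_le_left _ _))
    rw [show P z * f z - P z = P z * (f z - 1) by ring, norm_mul]
    have a1 := hMP z (hKm hz)
    gcongr
    linarith
  have hη₁e : M * (2 * η₁) ≤ e := by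
    have : η₁ ≤ e / (2 * M) := (min_le_right _ _).trans (min_le_left _ _)
    rw [le_div_iff₀ (by positivity)] at this
    linarith
  have hη₁g : M * (2 * η₁) ≤ (1/2 - g)/2 := by
    have : η₁ ≤ (1/2 - g) / (4 * M) := (min_le_right _ _).trans (min_le_right _ _)
    rw [le_div_iff₀ (by positivity)] at this
    linarith
  refine ⟨H ∪ G, D', ⟨hG2, ?_, ?_⟩, Finset.subset_union_left, ?_, ?_⟩
  · have hnr : n ∈ Finset.range N := Finset.mem_range.2 hn
    have s1 : ∑ j ∈ Finset.range N, (2 * s₀ + 1) * (D' j).κ + (2 * s₀ + 1) * κ =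
        ∑ j ∈ Finset.range N, (2 * s₀ + 1) * (D j).κ + (2 * s₀ + 1) * κ' := by
      rw [← Finset.add_sum_erase _ _ hnr, ← Finset.add_sum_erase (Finset.range N) (fun j => (2 * s₀ + 1) * (D j).κ) hnr]
      have : ∑ j ∈ (Finset.range N).erase n, (2 * s₀ + 1) * (D' j).κ =
        ∑ j ∈ (Finset.range N).erase n, (2 * s₀ + 1) * (D j).κ := by
        refine Finset.sum_congr rfl fun j hj => ?_
        rw [hD', Function.update_of_ne (Finset.ne_of_mem_erase hj)]
      rw [this, hD', Function.update_self, hDn]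
      simp only
      ring
    linarith
  · intro j hj
    by_cases hjn : j = n
    · subst hjn
      rw [hD', Function.update_self]
      refine ⟨by simp only; linarith, hn2, by simp only; linarith, h4, hκ'8, hn4,
        RA.mul (Kset_compact _ _ _ _) (ra.mono hKm) hf1, he'0, ?_, (g + 1/2)/2, by linarith, ?_⟩
      · intro z hz hzl
        simp only at hzl ⊢
        have a1 := hf4 z x₂ (by rw [hx₂]; linarith) (hδ2.trans (min_le_left _ _))
        have a2 := hMP z (hKm hz)
        have a3 : η₂ ≤ e' / (2 * M * (1 + 1/κ')) := min_le_right _ _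
        rw [le_div_iff₀ (by positivity)] at a3
        rw [norm_mul]
        calc ‖P z‖ * ‖f z‖ * (1 + 1/κ') ≤ M * (2 * η₂) * (1 + 1/κ') := by
              gcongr; linarith
          _ ≤ e' := by linarith
      · intro z hz hzl
        have a1 := hstep z hz (by linarith)
        have a2 := left z (hKm hz) hzl
        calc ‖P z * f z - 1‖ = ‖(P z * f z - P z) + (P z - 1)‖ := by ring_nf
          _ ≤ ‖P z * f z - P z‖ + ‖P z - 1‖ := norm_add_le _ _
          _ ≤ _ := by linarith
    · rw [hD', Function.update_of_ne hjn]
      obtain ⟨w1, w2, w3, w4⟩ := hw j hj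
      have tj := hI.task j hj
      obtain ⟨g', hg', hg''⟩ := tj.left
      refine ⟨tj.qlo.trans w1, w2, w3.trans tj.hiq, tj.κpos, tj.κle, w4, tj.ra.mono hKm, tj.epos, ?_,
        g', hg', fun z hz => hg'' z (hKm hz)⟩
      intro z hz hzl
      exact tj.bound z (hKm hz) (w1.le.trans hzl)
  · intro j hj
    by_cases hjn : j = n
    · subst hjn
      rw [hD', Function.update_self, hDn]
      refine ⟨by simp only; linarith, fun z hz => ?_⟩
      simp only
      have goal : ‖P z * f z - P z‖ ≤ e := by
        rcases le_total ((T j).d * z).re lo with hzl | hzl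
        · exact (hstep z hz hzl).trans hη₁e
        · refine le_trans ?_ (bound z (hKm hz) hzl)
          rw [show P z * f z - P z = P z * (f z - 1) by ring, norm_mul]
          gcongr
          refine (norm_sub_le _ _).trans ?_
          rw [norm_one]
          linarith [hf2 z hz]
      linarith
    · rw [hD', Function.update_of_ne hjn]
      simp [hD₁]
  · rw [hD', Function.update_self]
    exact min_le_right _ _

open Metric Set

theorem seq_exists {b : ℂ} {s₀ s₁ ε : ℝ} (hs₁ : 0 ≤ s₁) (hs : s₁ < s₀) (hε : 0 < ε) (T : ℕ → STask) :
    ∃ (H : ℕ → Finset (ℂ × ℝ)) (D : ℕ → ℕ → SData),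
      (∀ m, SInv b s₀ s₁ ε T m (H m) (D m)) ∧
      (∀ m, H m ⊆ H (m+1)) ∧
      (∀ m, ∀ n < m, (D (m+1) n).e ≤ (D m n).e ∧ ∀ z ∈ Kset b s₀ s₁ (H (m+1)),
        ‖(D (m+1) n).P z - (D m n).P z‖ ≤ 2 * ((D m n).e - (D (m+1) n).e)) ∧
      ∀ m, (D (m+1) (Nat.unpair m).1).e ≤ 1 / ((m:ℝ)+1) := by
  have step : ∀ (m : ℕ) (x : {x : Finset (ℂ × ℝ) × (ℕ → SData) // SInv b s₀ s₁ ε T m x.1 x.2}),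
      ∃ y : {x : Finset (ℂ × ℝ) × (ℕ → SData) // SInv b s₀ s₁ ε T (m+1) x.1 x.2},
        x.1.1 ⊆ y.1.1 ∧ (∀ n < m, (y.1.2 n).e ≤ (x.1.2 n).e ∧ ∀ z ∈ Kset b s₀ s₁ y.1.1,
        ‖(y.1.2 n).P z - (x.1.2 n).P z‖ ≤ 2 * ((x.1.2 n).e - (y.1.2 n).e)) ∧
        (y.1.2 (Nat.unpair m).1).e ≤ 1 / ((m:ℝ)+1) := by
    rintro m ⟨⟨H, D⟩, hx⟩
    obtain ⟨D₁, h1, h2⟩ := activate hs₁ hs hx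
    obtain ⟨H', D', h3, h4, h5, h6⟩ := process hs₁ hs h1 (Nat.unpair m).1
      (Nat.lt_succ_of_le (Nat.unpair_left_le m)) (1 / ((m:ℝ)+1)) (by positivity)
    refine ⟨⟨⟨H', D'⟩, h3⟩, h4, ?_, h6⟩
    intro n hn
    have := h5 n (by omega)
    rw [h2 n hn] at this
    exact this
  choose st hst using step
  have h0 : SInv b s₀ s₁ ε T 0 ∅ (fun _ => ⟨fun _ => 0, 0, 0, 0, 0⟩) :=
    ⟨⟨by simp, by simp, by simp, by simp⟩, by simpa using hε, by simp⟩
  let S : (m : ℕ) → {x : Finset (ℂ × ℝ) × (ℕ → SData) // SInv b s₀ s₁ ε T m x.1 x.2} :=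
    fun m => Nat.rec ⟨⟨∅, fun _ => ⟨fun _ => 0, 0, 0, 0, 0⟩⟩, h0⟩ (fun m x => st m x) m
  refine ⟨fun m => (S m).1.1, fun m => (S m).1.2, fun m => (S m).2, fun m => ?_, fun m => ?_, fun m => ?_⟩
  · exact (hst m (S m)).1
  · exact (hst m (S m)).2.1
  · exact (hst m (S m)).2.2

theorem limit_fun {b : ℂ} {s₀ s₁ ε : ℝ} {T : ℕ → STask}
    {H : ℕ → Finset (ℂ × ℝ)} {D : ℕ → ℕ → SData}
    (h1 : ∀ m, SInv b s₀ s₁ ε T m (H m) (D m))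
    (h3 : ∀ m, ∀ n < m, (D (m+1) n).e ≤ (D m n).e ∧ ∀ z ∈ Kset b s₀ s₁ (H (m+1)),
        ‖(D (m+1) n).P z - (D m n).P z‖ ≤ 2 * ((D m n).e - (D (m+1) n).e))
    (h4 : ∀ m, (D (m+1) (Nat.unpair m).1).e ≤ 1 / ((m:ℝ)+1))
    {X : Set ℂ} (hX : ∀ m, X ⊆ Kset b s₀ s₁ (H m)) (n : ℕ) :
    ∃ f : ℂ → ℂ, RA X f ∧ (∀ z ∈ X, (T n).q' ≤ ((T n).d * z).re → f z = 0) ∧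
      ∀ z ∈ X, ((T n).d * z).re ≤ (T n).q → f z ≠ 0 := by
  have mono : ∀ m, n < m → ∀ k, m ≤ k → (D k n).e ≤ (D m n).e ∧
      ∀ z ∈ X, ‖(D k n).P z - (D m n).P z‖ ≤ 2 * ((D m n).e - (D k n).e) := by
    intro m hm k hk
    induction k, hk using Nat.le_induction with
    | base => simp
    | succ k hk ih =>
      obtain ⟨a1, a2⟩ := h3 k n (by omega)
      refine ⟨a1.trans ih.1, fun z hz => ?_⟩
      have a3 := a2 z (hX _ hz)
      have a4 := ih.2 z hz
      calc ‖(D (k+1) n).P z - (D m n).P z‖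
          = ‖((D (k+1) n).P z - (D k n).P z) + ((D k n).P z - (D m n).P z)‖ := by ring_nf
        _ ≤ _ := norm_add_le _ _
        _ ≤ _ := by linarith
  have small : ∀ η : ℝ, 0 < η → ∃ m, n < m ∧ (D m n).e ≤ η := by
    intro η hη
    obtain ⟨k, hk⟩ := exists_nat_one_div_lt hη
    refine ⟨Nat.pair n k + 1, Nat.lt_succ_of_le (Nat.left_le_pair n k), ?_⟩
    have := h4 (Nat.pair n k)
    rw [Nat.unpair_pair] at this
    refine this.trans (le_trans ?_ hk.le)
    have : (k:ℝ) ≤ (Nat.pair n k : ℕ) := by exact_mod_cast Nat.right_le_pair n k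
    gcongr
  have epos : ∀ m, n < m → 0 < (D m n).e := fun m hm => ((h1 m).task n hm).epos
  have hlim : ∀ z, ∃ w, z ∈ X → ∀ m, n < m → ‖w - (D m n).P z‖ ≤ 2 * (D m n).e := by
    intro z
    by_cases hz : z ∈ X
    · have hc : CauchySeq (fun m => (D m n).P z) := by
        rw [Metric.cauchySeq_iff']
        intro η hη
        obtain ⟨m, hm, he⟩ := small (η/4) (by positivity)
        refine ⟨m, fun k hk => ?_⟩
        rw [dist_eq_norm]
        have := (mono m hm k hk).2 z hz
        have := epos k (by omega)
        linarith
      obtain ⟨w, hw⟩ := cauchySeq_tendsto_of_complete hc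
      refine ⟨w, fun _ m hm => ?_⟩
      refine le_of_tendsto ((hw.sub_const _).norm) ?_
      filter_upwards [Filter.eventually_ge_atTop m] with k hk
      have := (mono m hm k hk).2 z hz
      have := epos k (by omega)
      linarith
    · exact ⟨0, fun h => absurd h hz⟩
  choose f hf using hlim
  refine ⟨f, ?_, ?_, ?_⟩
  · refine RA.lim fun η hη => ?_
    obtain ⟨m, hm, he⟩ := small (η/2) (by positivity)
    exact ⟨(D m n).P, ((h1 m).task n hm).ra.mono (hX m), fun z hz => (hf z hz m hm).trans (by linarith)⟩
  · intro z hz hzq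
    by_contra hne
    have hp : 0 < ‖f z‖ := norm_pos_iff.2 hne
    obtain ⟨m, hm, he⟩ := small (‖f z‖/4) (by positivity)
    have tk := (h1 m).task n hm
    have b1 := tk.bound z (hX m hz) (by linarith [tk.lohi, tk.hiq])
    have hκ := tk.κpos
    have b2 : ‖(D m n).P z‖ ≤ ‖(D m n).P z‖ * (1 + 1 / (D m n).κ) :=
      le_mul_of_one_le_right (norm_nonneg _) (by linarith [show 0 < 1 / (D m n).κ by positivity])
    have b3 := hf z hz m hm
    have b4 := norm_sub_norm_le (f z) ((D m n).P z)
    linarith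
  · intro z hz hzq h0
    obtain ⟨m, hm, he⟩ := small (1/8) (by positivity)
    have tk := (h1 m).task n hm
    obtain ⟨g, hg, hg'⟩ := tk.left
    have b1 := hg' z (hX m hz) hzq
    have b3 := hf z hz m hm
    rw [h0, zero_sub, norm_neg] at b3
    have b4 := norm_sub_norm_le (1:ℂ) ((D m n).P z)
    rw [norm_one, norm_sub_rev] at b4
    linarith

theorem tasks_exist : ∃ T : ℕ → STask, ∀ (j : Fin 4) (q q' : ℚ), q < q' →
    ∃ n, (T n).d = Complex.I ^ (j:ℕ) ∧ (T n).q = q ∧ (T n).q' = q' := by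
  have : Nonempty (Fin 4 × {p : ℚ × ℚ // p.1 < p.2}) := ⟨⟨0, ⟨(0, 1), by norm_num⟩⟩⟩
  obtain ⟨f, hf⟩ := exists_surjective_nat (Fin 4 × {p : ℚ × ℚ // p.1 < p.2})
  refine ⟨fun n => ⟨Complex.I ^ ((f n).1:ℕ), (f n).2.1.1, (f n).2.1.2, ?_, ?_⟩, ?_⟩
  · rw [← pow_mul, mul_comm, pow_mul, Complex.I_pow_four, one_pow]
  · exact_mod_cast (f n).2.2
  · intro j q q' h
    obtain ⟨n, hn⟩ := hf (j, ⟨(q, q'), h⟩)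
    exact ⟨n, by simp [hn]⟩

open Metric Set

theorem RA.mem_Rx {X : Set ℂ} [CompactSpace X] {f : ℂ → ℂ} (h : RA X f) :
    ∃ F ∈ Rx X, ∀ x : X, F x = f x := by
  have hq : ∀ η : ℝ, 0 < η → ∃ G : C(X, ℂ), G ∈ R0set X ∧ ∀ x : X, ‖f x - G x‖ ≤ η := by
    intro η hη
    obtain ⟨p, q, h1, h2⟩ := h η hη
    refine ⟨⟨fun x => p.eval (x:ℂ) / q.eval (x:ℂ), ?_⟩, ⟨p, q, fun x => h1 x x.2, fun x => rfl⟩,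
      fun x => h2 x x.2⟩
    refine Continuous.div (p.continuous.comp continuous_subtype_val)
      (q.continuous.comp continuous_subtype_val) fun x => h1 x x.2
  have hc : Continuous (fun x : X => f x) := by
    refine continuous_of_uniform_approx_of_continuous fun u hu => ?_
    obtain ⟨η, hη, hu⟩ := Metric.mem_uniformity_dist.1 hu
    obtain ⟨G, _, hG⟩ := hq (η/2) (by positivity)
    refine ⟨G, G.continuous, fun y => hu ?_⟩
    rw [dist_eq_norm]
    linarith [hG y]
  refine ⟨⟨fun x : X => f x, hc⟩, ?_, fun x => rfl⟩
  change _ ∈ closure ((Algebra.adjoin ℂ (R0set X) : Subalgebra ℂ C(X, ℂ)) : Set C(X, ℂ))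
  rw [Metric.mem_closure_iff]
  intro η hη
  obtain ⟨G, hG, hG'⟩ := hq (η/2) (by positivity)
  refine ⟨G, Algebra.subset_adjoin hG, lt_of_le_of_lt ?_ (half_lt_self hη)⟩
  rw [ContinuousMap.dist_le (by positivity)]
  intro x
  rw [dist_eq_norm]
  exact hG' x

theorem regular_of {X : Set ℂ} [CompactSpace X]
    (h : ∀ (j : Fin 4) (q q' : ℚ), q < q' → ∃ f : ℂ → ℂ, RA X f ∧
      (∀ z ∈ X, (q':ℝ) ≤ (Complex.I ^ (j:ℕ) * z).re → f z = 0) ∧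
      ∀ z ∈ X, (Complex.I ^ (j:ℕ) * z).re ≤ q → f z ≠ 0) : RxRegular X := by
  intro E hE x hx
  obtain ⟨r, hr, hrE⟩ := Metric.isOpen_iff.1 hE.isOpen_compl x hx
  have key : ∀ j : Fin 4, ∃ F ∈ Rx X, F x ≠ 0 ∧ ∀ y : X,
      (Complex.I ^ (j:ℕ) * x).re + r/2 ≤ (Complex.I ^ (j:ℕ) * y).re → F y = 0 := by
    intro j
    obtain ⟨q', hq1, hq2⟩ := exists_rat_btwn
      (show (Complex.I ^ (j:ℕ) * (x:ℂ)).re < (Complex.I ^ (j:ℕ) * (x:ℂ)).re + r/2 by linarith)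
    obtain ⟨q, hq3, hq4⟩ := exists_rat_btwn hq1
    obtain ⟨f, hf1, hf2, hf3⟩ := h j q q' (by exact_mod_cast hq4)
    obtain ⟨F, hF, hFf⟩ := hf1.mem_Rx
    refine ⟨F, hF, ?_, fun y hy => ?_⟩
    · rw [hFf]; exact hf3 x x.2 hq3.le
    · rw [hFf]; exact hf2 y y.2 (by linarith)
  choose F hF hFx hFz using key
  refine ⟨algebraMap ℂ C(X, ℂ) (∏ j, F j x)⁻¹ * ∏ j, F j, ?_, ?_, ?_⟩
  · exact mul_mem (Subalgebra.algebraMap_mem _ _) (prod_mem fun j _ => hF j)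
  · have : ∏ j, F j x ≠ 0 := Finset.prod_ne_zero_iff.2 fun j _ => hFx j
    simp only [ContinuousMap.mul_apply, ContinuousMap.coe_prod, Finset.prod_apply, algebraMap_apply]
    simpa using inv_mul_cancel₀ this
  · intro y hy
    have hd : r ≤ dist y x := by
      by_contra hc
      exact hrE (mem_ball.2 (not_le.1 hc)) hy
    have : ∃ j : Fin 4, F j y = 0 := by
      by_contra hc
      push Not at hc
      have hh := fun j : Fin 4 => lt_of_not_ge (fun h => hc j (hFz j y h))
      have h0 := hh 0
      have h1 := hh 1
      have h2 := hh 2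
      have h3 := hh 3
      have e3 : Complex.I ^ 3 = -Complex.I := by rw [pow_succ, Complex.I_sq]; ring
      have v2 : ((2 : Fin 4) : ℕ) = 2 := rfl
      have v3 : ((3 : Fin 4) : ℕ) = 3 := rfl
      simp [v2, v3, e3] at h0 h1 h2 h3
      have hd2 : dist y x = dist (y:ℂ) (x:ℂ) := rfl
      rw [hd2, dist_eq_norm] at hd
      have := Complex.norm_le_abs_re_add_abs_im ((y:ℂ) - x)
      have a1 : |((y:ℂ) - x).re| < r/2 := by
        rw [abs_lt, Complex.sub_re]; constructor <;> linarith
      have a2 : |((y:ℂ) - x).im| < r/2 := by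
        rw [abs_lt, Complex.sub_im]; constructor <;> linarith
      linarith
    obtain ⟨j, hj⟩ := this
    simp only [ContinuousMap.mul_apply, ContinuousMap.coe_prod, Finset.prod_apply]
    exact mul_eq_zero_of_right _ (Finset.prod_eq_zero (Finset.mem_univ j) hj)

theorem cheese_of {b : ℂ} {s₀ s₁ ε : ℝ} (hs₁ : 0 ≤ s₁) (hs : s₁ < s₀) (H : ℕ → Finset (ℂ × ℝ))
    (hm : ∀ m, H m ⊆ H (m+1)) (hok : ∀ m, HOK b s₀ s₁ (H m)) (hb : ∀ m, ∑ h ∈ H m, h.2 ≤ ε) :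
    ∃ A : SwissCheese, A.IsClassical ∧ A.a 0 = b ∧ A.a 1 = b ∧ A.r 0 = s₀ ∧ A.r 1 = s₁ ∧
      A.annRadSum ≤ ε ∧ ∀ m, A.cheeseSet ⊆ Kset b s₀ s₁ (H m) := by
  classical
  have mono : Monotone H := monotone_nat_of_le_succ hm
  set Hi : Set (ℂ × ℝ) := ⋃ m, (H m : Set (ℂ × ℝ)) with hHi
  have hcount : Hi.Countable := countable_iUnion fun m => (H m).countable_toSet
  have : Countable Hi := hcount.to_subtype
  obtain ⟨e, he⟩ := exists_injective_nat Hi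
  have hmem : ∀ i : Hi, ∃ m, i.1 ∈ H m := fun i => mem_iUnion.1 i.2
  choose idx hidx using hmem
  have hpos : ∀ i : Hi, 0 < i.1.2 := fun i => (hok _).pos _ (hidx i)
  set C : ℕ → ℂ := Function.extend e (fun i => i.1.1) (fun _ => b) with hC
  set R : ℕ → ℝ := Function.extend e (fun i => i.1.2) 0 with hR
  have hCe : ∀ i, C (e i) = i.1.1 := fun i => he.extend_apply _ _ i
  have hRe : ∀ i, R (e i) = i.1.2 := fun i => he.extend_apply _ _ i
  have hR0 : ∀ n, n ∉ range e → R n = 0 := fun n hn => by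
    rw [hR, Function.extend_apply']; rfl
    exact hn
  have hRn : ∀ n, 0 ≤ R n := fun n => by
    by_cases hn : n ∈ range e
    · obtain ⟨i, rfl⟩ := hn; rw [hRe]; exact (hpos i).le
    · rw [hR0 n hn]
  have hfin : ∀ u : Finset Hi, ∑ i ∈ u, i.1.2 ≤ ε := by
    intro u
    refine le_trans ?_ (hb (u.sup idx))
    have : ∑ i ∈ u, i.1.2 = ∑ h ∈ u.map (Function.Embedding.subtype _), h.2 := by
      rw [Finset.sum_map]; rfl
    rw [this]
    refine Finset.sum_le_sum_of_subset_of_nonneg ?_ fun h hh _ => ((hok _).pos h hh).le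
    intro h hh
    rw [Finset.mem_map] at hh
    obtain ⟨i, hi, rfl⟩ := hh
    exact mono (Finset.le_sup hi) (hidx i)
  have hsum : Summable (fun i : Hi => i.1.2) := summable_of_sum_le (fun i => (hpos i).le) hfin
  have hcomp : R ∘ e = fun i : Hi => i.1.2 := funext hRe
  have hRs : Summable R := (he.summable_iff hR0).1 (by rw [hcomp]; exact hsum)
  have hRt : ∑' n, R n ≤ ε := by
    rw [← he.tsum_eq (f := R) (fun n hn => by
      by_contra hc; exact hn (hR0 n hc))]
    simp only [hRe]
    exact hsum.tsum_le_of_sum_le hfin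
  obtain ⟨A, a0, a1, r0, r1, a2, r2⟩ : ∃ A : SwissCheese, A.a 0 = b ∧ A.a 1 = b ∧ A.r 0 = s₀ ∧
      A.r 1 = s₁ ∧ (∀ n, A.a (n+2) = C n) ∧ (∀ n, A.r (n+2) = R n) :=
    ⟨⟨fun n => match n with | 0 => b | 1 => b | n+2 => C n,
    fun n => match n with | 0 => s₀ | 1 => s₁ | n+2 => R n, fun n => match n with
      | 0 => hs₁.trans hs.le | 1 => hs₁ | n+2 => hRn n⟩, rfl, rfl, rfl, rfl, fun _ => rfl, fun _ => rfl⟩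
  have hsig : ∀ k ∈ A.sig, k = 1 ∨ ∃ i : Hi, k = e i + 2 := by
    rintro k ⟨hk1, hk2⟩
    match k with
    | 0 => omega
    | 1 => exact Or.inl rfl
    | n+2 =>
      right
      rw [r2] at hk2
      by_cases hn : n ∈ range e
      · obtain ⟨i, rfl⟩ := hn; exact ⟨i, rfl⟩
      · rw [hR0 n hn] at hk2; exact absurd hk2 (lt_irrefl _)
  have disj : ∀ (p q : ℂ) (s t : ℝ), s + t < dist p q → closedBall p s ∩ closedBall q t = ∅ :=
    fun p q s t h => (closedBall_disjoint_closedBall h).inter_eq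
  refine ⟨A, ⟨?_, ?_, ?_⟩, a0, a1, r0, r1, ?_, ?_⟩
  · have h' : Summable (fun n => (fun n => A.r (n+1)) (n+1)) := by
      simpa only [add_assoc, Nat.reduceAdd, r2] using hRs
    exact (summable_nat_add_iff (f := fun n => A.r (n+1)) 1).1 h'
  · rw [r0]; linarith
  · intro k hk
    rcases hsig k hk with rfl | ⟨i, rfl⟩
    · refine ⟨?_, ?_⟩
      · rw [a0, a1, r0, r1]; exact closedBall_subset_ball hs
      · intro l hl hne
        rcases hsig l hl with rfl | ⟨j, rfl⟩
        · exact absurd rfl hne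
        · rw [a1, r1, a2, r2, hCe, hRe]
          apply disj
          rw [dist_comm]
          exact (hok _).out _ (hidx j)
    · refine ⟨?_, ?_⟩
      · rw [a0, r0, a2, r2, hCe, hRe]
        intro z hz
        have := (hok _).inB _ (hidx i)
        rw [mem_closedBall] at hz
        rw [mem_ball]
        linarith [dist_triangle z i.1.1 b]
      · intro l hl hne
        rcases hsig l hl with rfl | ⟨j, rfl⟩
        · rw [a1, r1, a2, r2, hCe, hRe]
          apply disj
          rw [add_comm]
          exact (hok _).out _ (hidx i)
        · rw [a2, r2, a2, r2, hCe, hRe, hCe, hRe]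
          apply disj
          refine (hok (max (idx i) (idx j))).disj _ (mono (le_max_left _ _) (hidx i)) _
            (mono (le_max_right _ _) (hidx j)) ?_
          intro hij
          apply hne
          rw [Subtype.ext hij]
  · unfold SwissCheese.annRadSum; simpa only [r2] using hRt
  · intro m z hz
    obtain ⟨hz1, hz2⟩ := hz
    simp only [mem_iUnion, not_exists, mem_Ici, mem_ball, not_lt] at hz2
    refine ⟨by rwa [a0, r0, mem_closedBall] at hz1, by simpa only [a1, r1] using hz2 1 le_rfl, fun h hh => ?_⟩
    have hi : h ∈ Hi := mem_iUnion.2 ⟨m, hh⟩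
    have := hz2 (e ⟨h, hi⟩ + 2) (by omega)
    rw [a2, r2, hCe, hRe] at this
    exact this

theorem stmt_12 (b : ℂ) (s₀ s₁ : ℝ) (hs₁ : 0 ≤ s₁) (hs : s₁ < s₀) (ε : ℝ) (hε : 0 < ε) :
    ∃ A : SwissCheese, A.IsClassical ∧ A.a 0 = b ∧ A.a 1 = b ∧ A.r 0 = s₀ ∧ A.r 1 = s₁ ∧
      A.annRadSum < ε ∧
      RxRegular A.cheeseSet := by
  obtain ⟨T, hT⟩ := tasks_exist
  obtain ⟨H, D, h1, h2, h3, h4⟩ := seq_exists (b := b) hs₁ hs (half_pos hε) T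
  obtain ⟨A, c1, c2, c3, c4, c5, c6, c7⟩ := cheese_of hs₁ hs H h2 (fun m => (h1 m).hok)
    (ε := ε/2) (fun m => by
      have := (h1 m).budget
      have : 0 ≤ ∑ n ∈ Finset.range m, (2 * s₀ + 1) * (D m n).κ :=
        Finset.sum_nonneg fun n hn => mul_nonneg (by linarith)
          ((h1 m).task n (Finset.mem_range.1 hn)).κpos.le
      linarith)
  refine ⟨A, c1, c2, c3, c4, c5, by linarith, regular_of fun j q q' hq => ?_⟩
  obtain ⟨n, t1, t2, t3⟩ := hT j q q' hq
  obtain ⟨f, f1, f2, f3⟩ := limit_fun h1 h3 h4 c7 n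
  rw [t1, t3] at f2
  rw [t1, t2] at f3
  exact ⟨f, f1, f2, f3⟩
end

section
/- Let a_1, a_2 ∈ ℂ and let r_1, r_2 > 0 be such that ball(a_1, r_1) is not contained in ball(a_2, r_2) and ball(a_2, r_2) is not contained in ball(a_1, r_1). Then there exists a unique pair (a, r) ∈ ℂ × (0, ∞) such that r > r_1 − r_2, closedBall(a, r) ⊆ closedBall(a_1, r_1), closedBall(a, r) ∩ ball(a_2, r_2) = ∅, and r is maximal among all radii r' for which some closed disk closedBall(a', r') is contained in closedBall(a_1, r_1) and disjoint from ball(a_2, r_2). -/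
open Metric

lemma aux_sub (a b : ℂ) (r R : ℝ) (hr : 0 ≤ r) (h : closedBall a r ⊆ closedBall b R) :
    ‖a - b‖ + r ≤ R := by
  by_cases hab : a = b
  · subst hab
    have : a + (r : ℂ) ∈ closedBall a r := by
      simp [mem_closedBall, dist_eq_norm, abs_of_nonneg hr]
    have := h this
    simpa [mem_closedBall, dist_eq_norm, abs_of_nonneg hr] using this
  · have hn : 0 < ‖a - b‖ := norm_pos_iff.2 (sub_ne_zero.2 hab)
    have hmem : a + ((r / ‖a - b‖ : ℝ) : ℂ) * (a - b) ∈ closedBall a r := by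
      rw [mem_closedBall, dist_eq_norm, add_sub_cancel_left, norm_mul, Complex.norm_real,
        Real.norm_of_nonneg (by positivity), div_mul_cancel₀ _ hn.ne']
    have h2 := h hmem
    have e : a + ((r / ‖a - b‖ : ℝ) : ℂ) * (a - b) - b
      = ((1 + r / ‖a - b‖ : ℝ) : ℂ) * (a - b) := by push_cast; ring
    rw [mem_closedBall, dist_eq_norm, e, norm_mul, Complex.norm_real,
        Real.norm_of_nonneg (by positivity), add_mul, div_mul_cancel₀ _ hn.ne', one_mul] at h2
    exact h2

lemma aux_disj (a b : ℂ) (r R : ℝ) (hr : 0 ≤ r) (hR : 0 < R) :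
    closedBall a r ∩ ball b R = ∅ ↔ r + R ≤ ‖a - b‖ := by
  rw [← Set.disjoint_iff_inter_eq_empty, disjoint_closedBall_ball_iff hr hR, dist_eq_norm]

lemma aux_uniq (u v : ℂ) (s : ℝ) (hs : ‖u‖ ≤ s) (h : s = 0 ∨ ‖v‖ + s ≤ ‖u + v‖) :
    (‖v‖ : ℂ) * u = (s : ℂ) * v := by
  rcases h with h | h
  · subst h
    have : u = 0 := norm_le_zero_iff.1 hs
    simp [this]
  · have h0 := norm_nonneg u
    have h1 := norm_add_le u v
    have hu : ‖u‖ = s := by linarith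
    have h3 : ‖u + v‖ = ‖u‖ + ‖v‖ := by linarith
    have h4 : SameRay ℝ u v := sameRay_iff_norm_add.2 h3
    have h5 := h4.norm_smul_eq
    rw [← hu]
    simpa using h5.symm

theorem stmt_14 (a₁ a₂ : ℂ) (r₁ r₂ : ℝ) (hr₁ : 0 < r₁) (hr₂ : 0 < r₂)
    (h₁₂ : ¬ ball a₁ r₁ ⊆ ball a₂ r₂) (h₂₁ : ¬ ball a₂ r₂ ⊆ ball a₁ r₁) :
    ∃! p : ℂ × ℝ, 0 < p.2 ∧ r₁ - r₂ < p.2 ∧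
      closedBall p.1 p.2 ⊆ closedBall a₁ r₁ ∧
      closedBall p.1 p.2 ∩ ball a₂ r₂ = ∅ ∧
      ∀ (a' : ℂ) (r' : ℝ), closedBall a' r' ⊆ closedBall a₁ r₁ →
        closedBall a' r' ∩ ball a₂ r₂ = ∅ → r' ≤ p.2 := by
  have hd1 : r₂ < r₁ + ‖a₁ - a₂‖ := by
    by_contra hc
    exact h₁₂ (ball_subset_ball' (by rw [dist_eq_norm]; linarith))
  have hd2 : r₁ < r₂ + ‖a₁ - a₂‖ := by
    by_contra hc
    exact h₂₁ (ball_subset_ball' (by rw [dist_eq_norm, norm_sub_rev]; linarith))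
  have hd : 0 < ‖a₁ - a₂‖ := by
    rcases le_total r₁ r₂ with h | h <;> linarith
  obtain ⟨R, hR0, hR1, hR2, hR3, hR4⟩ : ∃ R : ℝ, 0 < R ∧ r₁ - r₂ < R ∧ R ≤ r₁ ∧
      2 * R ≤ ‖a₁ - a₂‖ + r₁ - r₂ ∧ (R = r₁ ∨ 2 * R = ‖a₁ - a₂‖ + r₁ - r₂) := by
    rcases le_total r₁ ((‖a₁ - a₂‖ + r₁ - r₂) / 2) with h | h
    · exact ⟨r₁, hr₁, by linarith, le_rfl, by linarith, Or.inl rfl⟩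
    · exact ⟨(‖a₁ - a₂‖ + r₁ - r₂) / 2, by linarith, by linarith, h, by linarith,
        Or.inr (by linarith)⟩
  have hmax : ∀ (a' : ℂ) (r' : ℝ), closedBall a' r' ⊆ closedBall a₁ r₁ →
        closedBall a' r' ∩ ball a₂ r₂ = ∅ → r' ≤ R := by
    intro a' r' h1 h2
    rcases lt_or_ge r' 0 with h | h
    · linarith
    have h3 := aux_sub _ _ _ _ h h1
    have h4 := (aux_disj _ _ _ _ h hr₂).1 h2
    have h5 := norm_sub_le_norm_sub_add_norm_sub a' a₁ a₂
    have h6 := norm_nonneg (a' - a₁)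
    rcases hR4 with h7 | h7 <;> linarith
  have hs : 0 ≤ (r₁ - R) / ‖a₁ - a₂‖ := div_nonneg (by linarith) hd.le
  set a : ℂ := a₁ + (((r₁ - R) / ‖a₁ - a₂‖ : ℝ) : ℂ) * (a₁ - a₂) with ha
  have ha1 : ‖a - a₁‖ = r₁ - R := by
    rw [ha, add_sub_cancel_left, norm_mul, Complex.norm_real,
        Real.norm_of_nonneg hs, div_mul_cancel₀ _ hd.ne']
  have ha2 : ‖a - a₂‖ = ‖a₁ - a₂‖ + (r₁ - R) := by
    have e : a - a₂ = ((1 + (r₁ - R) / ‖a₁ - a₂‖ : ℝ) : ℂ) * (a₁ - a₂) := by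
      rw [ha]; push_cast; ring
    rw [e, norm_mul, Complex.norm_real,
        Real.norm_of_nonneg (by linarith), add_mul, div_mul_cancel₀ _ hd.ne', one_mul]
  have hA : closedBall a R ⊆ closedBall a₁ r₁ :=
    closedBall_subset_closedBall' (by rw [dist_eq_norm]; linarith)
  have hB : closedBall a R ∩ ball a₂ r₂ = ∅ :=
    (aux_disj _ _ _ _ hR0.le hr₂).2 (by linarith)
  refine ⟨(a, R), ⟨hR0, hR1, hA, hB, hmax⟩, ?_⟩
  rintro ⟨b, r⟩ ⟨g1, g2, g3, g4, g5⟩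
  simp only at g1 g2 g3 g4 g5
  have hrR : r = R := le_antisymm (hmax b r g3 g4) (g5 a R hA hB)
  subst hrR
  have k1 := aux_sub _ _ _ _ g1.le g3
  have k2 := (aux_disj _ _ _ _ g1.le hr₂).1 g4
  have key : ∀ c : ℂ, ‖c - a₁‖ ≤ r₁ - r → r + r₂ ≤ ‖c - a₂‖ →
      (‖a₁ - a₂‖ : ℂ) * (c - a₁) = ((r₁ - r : ℝ) : ℂ) * (a₁ - a₂) := by
    intro c hc1 hc2
    apply aux_uniq _ _ _ hc1
    rw [sub_add_sub_cancel]
    rcases hR4 with h7 | h7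
    · left; linarith
    · right; linarith
  have e1 := key b (by linarith) k2
  have e2 := key a ha1.le (by linarith)
  have e3 := mul_left_cancel₀ (Complex.ofReal_ne_zero.2 hd.ne') (e1.trans e2.symm)
  have : b = a := sub_left_injective e3
  rw [this]
end

section
/- For each C > 0 there exists a classical abstract Swiss cheese B = ((b_n, s_n)) with b_0 = 0 and s_0 = 1 such that the unit circle 𝕋 is a subset of X_B, R(X_B) has no non-zero bounded point derivation at any point of X_B, and ∑_{n ≥ 1} s_n/d_n² ≤ C, where d_n is the distance from the disk ball(b_n, s_n) to 𝕋 if s_n > 0 and d_n = 1 if s_n = 0. -/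
open Metric Set

open Metric Set

/-- The distance from a set `s ⊆ ℂ` to the unit circle `𝕋`:
`inf {|z − w| : z ∈ s, w ∈ 𝕋}`. -/
noncomputable def distToCircle (s : Set ℂ) : ℝ :=
  sInf {d : ℝ | ∃ z ∈ s, ∃ w ∈ sphere (0 : ℂ) 1, d = dist z w}

/-- `d_n` for a Swiss cheese `B`: the distance from `ball(b_n, s_n)` to `𝕋` if `s_n > 0`,
and `1` if `s_n = 0`. (Here the index `n ≥ 1` is written as `n + 1`.) -/
noncomputable def distT (B : SwissCheese) (n : ℕ) : ℝ :=
  if 0 < B.r (n + 1) then distToCircle (ball (B.a (n + 1)) (B.r (n + 1))) else 1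

/-- Existence of a good partial-fraction test function at `x`. -/
def RatTest (Y : Set ℂ) (x : ℂ) (M : ℝ) : Prop :=
  ∃ (s : Finset (ℕ × ℕ)) (a c : ℕ × ℕ → ℂ), (∀ i ∈ s, a i ∉ Y) ∧
    (∀ z ∈ Y, ‖∑ i ∈ s, c i / (z - a i)‖ ≤ 40) ∧ M ≤ ‖∑ i ∈ s, c i / (x - a i) ^ 2‖

lemma bpd_zero (X : Set ℂ) [CompactSpace X] (x : X) (H : ∀ M : ℝ, RatTest X x M)
    (d : Rx X →L[ℂ] ℂ) (hd : IsBPD X x d) : d = 0 := by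
  have hR0 : ∀ f ∈ R0set X, f ∈ Rx X := fun f hf =>
    Subalgebra.le_topologicalClosure _ (Algebra.subset_adjoin hf)
  have h1 : d 1 = 0 := by
    have := hd 1 1
    simp at this
    exact this
  have hconst : ∀ c : ℂ, d (algebraMap ℂ (Rx X) c) = 0 := by
    intro c
    rw [Algebra.algebraMap_eq_smul_one, map_smul, h1, smul_zero]
  -- the coordinate function
  let Z0 : C(X, ℂ) := ⟨fun z => z, continuous_subtype_val⟩
  have hZ0 : Z0 ∈ Rx X := hR0 _ ⟨Polynomial.X, 1, by simp, by simp [Z0]⟩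
  let Z : Rx X := ⟨Z0, hZ0⟩
  -- simple poles
  have hpole : ∀ a : ℂ, a ∉ X → ∃ g : Rx X, (∀ z : X, (g : C(X, ℂ)) z = 1 / ((z : ℂ) - a)) ∧
      d g = - d Z / ((x : ℂ) - a) ^ 2 := by
    intro a ha
    have hne : ∀ z : X, (z : ℂ) - a ≠ 0 := fun z h => ha (by
      rw [sub_eq_zero] at h; rw [← h]; exact z.2)
    let g0 : C(X, ℂ) := ⟨fun z => 1 / ((z : ℂ) - a), by
      refine Continuous.div continuous_const (by fun_prop) hne⟩
    have hg0 : g0 ∈ Rx X := hR0 _ ⟨1, Polynomial.X - Polynomial.C a, by simpa using hne,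
      by simp [g0]⟩
    refine ⟨⟨g0, hg0⟩, fun z => rfl, ?_⟩
    have e : (⟨g0, hg0⟩ : Rx X) * (Z - algebraMap ℂ (Rx X) a) = 1 := by
      apply Subtype.ext
      ext z
      change 1 / ((z : ℂ) - a) * ((z : ℂ) - a) = 1
      field_simp [hne z]
    have := hd ⟨g0, hg0⟩ (Z - algebraMap ℂ (Rx X) a)
    rw [e, h1, map_sub, hconst] at this
    change 0 = 1 / ((x : ℂ) - a) * (d Z - 0) + d ⟨g0, hg0⟩ * ((x : ℂ) - a) at this
    have hx := hne x
    field_simp at this ⊢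
    linear_combination -this
  have hZ : d Z = 0 := by
    by_contra hne
    have hpos : 0 < ‖d Z‖ := norm_pos_iff.mpr hne
    obtain ⟨s, a, c, ha, hb, hM⟩ := H ((40 * ‖d‖ + 1) / ‖d Z‖)
    choose! g hg hdg using hpole
    let F : Rx X := ∑ i ∈ s, c i • g (a i)
    have hFn : ‖F‖ ≤ 40 := by
      change ‖(F : C(X, ℂ))‖ ≤ 40
      rw [ContinuousMap.norm_le _ (by norm_num)]
      intro z
      have : (F : C(X, ℂ)) z = ∑ i ∈ s, c i / ((z : ℂ) - a i) := by
        simp only [F, AddSubmonoidClass.coe_finsetSum, ContinuousMap.coe_sum, Finset.sum_apply]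
        refine Finset.sum_congr rfl fun i hi => ?_
        change c i * (g (a i) : C(X, ℂ)) z = _
        rw [hg _ (ha i hi)]; ring
      rw [this]; exact hb z z.2
    have hdF : d F = - d Z * ∑ i ∈ s, c i / ((x : ℂ) - a i) ^ 2 := by
      simp only [F, map_sum, map_smul, Finset.mul_sum]
      refine Finset.sum_congr rfl fun i hi => ?_
      rw [hdg _ (ha i hi), smul_eq_mul]; ring
    have h3 : ‖d F‖ ≤ ‖d‖ * 40 := (d.le_opNorm F).trans (by gcongr)
    rw [hdF, norm_mul, norm_neg] at h3
    rw [div_le_iff₀ hpos] at hM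
    nlinarith
  have hpoly : ∀ p : Polynomial ℂ, d (Polynomial.aeval Z p) = 0 := by
    intro p
    induction p using Polynomial.induction_on' with
    | add p q hp hq => simp [hp, hq]
    | monomial n a =>
      rw [Polynomial.aeval_monomial, ← Algebra.smul_def, map_smul]
      have : d (Z ^ n) = 0 := by
        induction n with
        | zero => simpa using h1
        | succ n ih => rw [pow_succ, hd, ih, hZ]; simp
      rw [this, smul_zero]
  have hpolyv : ∀ (p : Polynomial ℂ) (z : X),
      ((Polynomial.aeval Z p : Rx X) : C(X, ℂ)) z = p.eval (z : ℂ) := by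
    intro p z
    let ev : Rx X →ₐ[ℂ] ℂ := (ContinuousMap.evalAlgHom ℂ ℂ z).comp (Rx X).val
    change ev (Polynomial.aeval Z p) = _
    rw [← Polynomial.aeval_algHom_apply, Polynomial.aeval_def, Polynomial.eval₂_eq_eval_map]
    simp [ev, Z, Z0]
  have hadj : ∀ f ∈ Algebra.adjoin ℂ (R0set X), ∃ F : Rx X, (F : C(X, ℂ)) = f ∧ d F = 0 := by
    intro f hf
    induction hf using Algebra.adjoin_induction with
    | mem f hf =>
      refine ⟨⟨f, hR0 f hf⟩, rfl, ?_⟩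
      obtain ⟨p, q, hq, hpq⟩ := hf
      have e : (⟨f, hR0 f ⟨p, q, hq, hpq⟩⟩ : Rx X) * Polynomial.aeval Z q =
          Polynomial.aeval Z p := by
        apply Subtype.ext
        ext z
        change f z * ((Polynomial.aeval Z q : Rx X) : C(X, ℂ)) z = _
        rw [hpolyv, hpolyv, hpq]
        field_simp [hq z]
      have := hd ⟨f, hR0 f ⟨p, q, hq, hpq⟩⟩ (Polynomial.aeval Z q)
      rw [e, hpoly, hpoly, hpolyv, mul_zero, zero_add] at this
      exact (mul_eq_zero.mp this.symm).resolve_right (hq x)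
    | algebraMap r => exact ⟨algebraMap ℂ _ r, rfl, hconst r⟩
    | add f g _ _ h1 h2 =>
      obtain ⟨F, hF, hF0⟩ := h1
      obtain ⟨G, hG, hG0⟩ := h2
      exact ⟨F + G, by simp [hF, hG], by simp [hF0, hG0]⟩
    | mul f g _ _ h1 h2 =>
      obtain ⟨F, hF, hF0⟩ := h1
      obtain ⟨G, hG, hG0⟩ := h2
      exact ⟨F * G, by simp [hF, hG], by rw [hd, hF0, hG0]; simp⟩
  have hcl : IsClosed (Subtype.val '' {F : Rx X | d F = 0}) := by
    have hc : IsClosed ((Rx X : Set C(X, ℂ))) := Subalgebra.isClosed_topologicalClosure _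
    exact hc.isClosedEmbedding_subtypeVal.isClosedMap _
      (isClosed_eq d.continuous continuous_const)
  ext F
  have hF : (F : C(X, ℂ)) ∈ closure ((Algebra.adjoin ℂ (R0set X) : Set C(X, ℂ))) := F.2
  have := closure_minimal (fun f hf => by
    obtain ⟨F, h1, h2⟩ := hadj f hf
    exact ⟨F, h2, h1⟩) hcl hF
  obtain ⟨F', h1, h2⟩ := this
  rw [← Subtype.ext h2]
  simpa using h1

lemma box_sum (N : ℕ) (hN : 1 ≤ N) (s : Finset (ℤ × ℤ)) (h0 : (0 : ℤ × ℤ) ∉ s)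
    (hc : s.card ≤ N ^ 2) :
    ∑ v ∈ s, 1 / ((max v.1.natAbs v.2.natAbs : ℕ) : ℝ) ≤ 9 * N := by
  have hNr : (1 : ℝ) ≤ N := by exact_mod_cast hN
  rw [← Finset.sum_filter_add_sum_filter_not s (fun v => max v.1.natAbs v.2.natAbs ≤ N)]
  have hA : ∑ v ∈ s.filter (fun v => max v.1.natAbs v.2.natAbs ≤ N),
      1 / ((max v.1.natAbs v.2.natAbs : ℕ) : ℝ) ≤ 8 * N := by
    calc _ ≤ ∑ v ∈ (Finset.Icc 1 N).biUnion (fun n => (Finset.box n : Finset (ℤ × ℤ))),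
          1 / ((max v.1.natAbs v.2.natAbs : ℕ) : ℝ) := by
          apply Finset.sum_le_sum_of_subset_of_nonneg
          · intro v hv
            rw [Finset.mem_filter] at hv
            rw [Finset.mem_biUnion]
            refine ⟨max v.1.natAbs v.2.natAbs, ?_, Int.mem_box.mpr rfl⟩
            rw [Finset.mem_Icc]
            refine ⟨?_, hv.2⟩
            by_contra hlt
            have h1 : v.1 = 0 := by omega
            have h2 : v.2 = 0 := by omega
            exact h0 (by rw [← show v = 0 from Prod.ext h1 h2]; exact hv.1)
          · intros; positivity
      _ ≤ ∑ n ∈ Finset.Icc 1 N, ∑ v ∈ (Finset.box n : Finset (ℤ × ℤ)),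
          1 / ((max v.1.natAbs v.2.natAbs : ℕ) : ℝ) := by
          rw [Finset.sum_biUnion]
          intro m _ n _ hmn
          rw [Function.onFun, Finset.disjoint_left]
          intro v hv hv'
          rw [Int.mem_box] at hv hv'
          exact hmn (hv.symm.trans hv')
      _ = ∑ n ∈ Finset.Icc 1 N, (8 : ℝ) := by
          refine Finset.sum_congr rfl fun n hn => ?_
          rw [Finset.mem_Icc] at hn
          rw [Finset.sum_congr rfl (g := fun _ => 1 / (n : ℝ))
            (fun v hv => by rw [Int.mem_box.mp hv]), Finset.sum_const, Int.card_box (by omega)]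
          have : (n : ℝ) ≠ 0 := by exact_mod_cast (by omega : n ≠ 0)
          simp
          field_simp
      _ = 8 * N := by simp [mul_comm]
  have hB : ∑ v ∈ s.filter (fun v => ¬ max v.1.natAbs v.2.natAbs ≤ N),
      1 / ((max v.1.natAbs v.2.natAbs : ℕ) : ℝ) ≤ N := by
    calc _ ≤ ∑ v ∈ s.filter (fun v => ¬ max v.1.natAbs v.2.natAbs ≤ N), 1 / (N : ℝ) := by
          refine Finset.sum_le_sum fun v hv => ?_
          rw [Finset.mem_filter, not_le] at hv
          apply one_div_le_one_div_of_le (by linarith)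
          exact_mod_cast hv.2.le
      _ ≤ ∑ v ∈ s, 1 / (N : ℝ) :=
          Finset.sum_le_sum_of_subset_of_nonneg (Finset.filter_subset _ _)
            (fun _ _ _ => by positivity)
      _ = s.card * (1 / (N : ℝ)) := by simp
      _ ≤ ((N : ℝ) ^ 2) * (1 / (N : ℝ)) := by
          gcongr; exact_mod_cast hc
      _ = N := by field_simp
  linarith

/-- Grid points. -/
def gpt (h : ℝ) (v : ℤ × ℤ) : ℂ := ⟨h * v.1, h * v.2⟩

lemma grid_upper (h r : ℝ) (hh : 0 < h) (hr : 0 < r) (N : ℕ) (hN : 1 ≤ N) (s : Finset (ℤ × ℤ))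
    (hc : s.card ≤ N ^ 2) (z : ℂ) (hz : ∀ v ∈ s, r ≤ ‖z - gpt h v‖) :
    ∑ v ∈ s, r / ‖z - gpt h v‖ ≤ 1 + 18 * N * r / h := by
  set m : ℤ × ℤ := (round (z.re / h), round (z.im / h)) with hm
  have hfar : ∀ v ∈ s.erase m, r / ‖z - gpt h v‖ ≤
      (2 * r / h) * (1 / ((max (v - m).1.natAbs (v - m).2.natAbs : ℕ) : ℝ)) := by
    intro v hv
    have hvm : v ≠ m := Finset.ne_of_mem_erase hv
    have key : ∀ (t : ℝ) (p : ℤ), h * ((p - round (t / h)).natAbs : ℝ) ≤ |t - h * p| + h / 2 := by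
      intro t p
      have h1 : |t / h - round (t / h)| ≤ 1 / 2 := abs_sub_round _
      have h2 : ((p - round (t / h)).natAbs : ℝ) = |(p : ℝ) - round (t / h)| := by
        rw [Nat.cast_natAbs]; push_cast; rfl
      rw [h2]
      have h3 : |(p : ℝ) - round (t / h)| ≤ |t / h - p| + 1 / 2 := by
        rw [abs_sub_comm (t / h)]
        exact (abs_sub_le _ (t / h) _).trans (by linarith)
      have h4 : |t - h * p| = h * |t / h - p| := by
        rw [← abs_of_pos hh, ← abs_mul, abs_of_pos hh]; congr 1; field_simp
      rw [h4]; nlinarith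
    set K := max (v - m).1.natAbs (v - m).2.natAbs with hK
    have hK1 : 1 ≤ K := by
      by_contra hlt
      apply hvm
      have h1 : (v - m).1 = 0 := by omega
      have h2 : (v - m).2 = 0 := by omega
      exact sub_eq_zero.mp (Prod.ext h1 h2)
    have hKr : (1 : ℝ) ≤ K := by exact_mod_cast hK1
    have hb : h * K ≤ ‖z - gpt h v‖ + h / 2 := by
      rcases max_choice (v - m).1.natAbs (v - m).2.natAbs with e | e
      · rw [hK, e]
        have := key z.re v.1
        have h5 : |(z - gpt h v).re| ≤ _ := Complex.abs_re_le_norm _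
        simp only [gpt, Complex.sub_re] at h5
        refine le_trans this ?_
        simp only [gpt]; linarith
      · rw [hK, e]
        have := key z.im v.2
        have h5 : |(z - gpt h v).im| ≤ _ := Complex.abs_im_le_norm _
        simp only [gpt, Complex.sub_im] at h5
        refine le_trans this ?_
        simp only [gpt]; linarith
    have hb2 : h * K / 2 ≤ ‖z - gpt h v‖ := by nlinarith
    calc r / ‖z - gpt h v‖ ≤ r / (h * K / 2) := by gcongr
      _ = _ := by field_simp
  have hsum : ∑ v ∈ s.erase m, r / ‖z - gpt h v‖ ≤ 18 * N * r / h := by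
    refine (Finset.sum_le_sum hfar).trans ?_
    rw [← Finset.mul_sum]
    have hinj : Set.InjOn (fun v : ℤ × ℤ => v - m) (s.erase m) := fun a _ b _ h => by
      simpa using h
    have e := box_sum N hN ((s.erase m).image (fun v => v - m)) (by
      simp [sub_eq_zero]) (Finset.card_image_le.trans
        ((Finset.card_le_card (Finset.erase_subset _ _)).trans hc))
    rw [Finset.sum_image hinj] at e
    calc _ ≤ (2 * r / h) * (9 * N) := by gcongr
      _ = _ := by ring
  by_cases hms : m ∈ s
  · rw [← Finset.add_sum_erase s _ hms]
    have : r / ‖z - gpt h m‖ ≤ 1 := div_le_one_of_le₀ (hz m hms) (norm_nonneg _)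
    linarith
  · rw [Finset.erase_eq_of_notMem hms] at hsum
    linarith

lemma quad_sum (M : ℝ) : ∃ N : ℕ, 1 ≤ N ∧ M ≤ ∑ v ∈ Finset.Icc 1 N ×ˢ Finset.Icc 1 N,
    1 / (((v.1 : ℝ) + 1) ^ 2 + ((v.2 : ℝ) + 1) ^ 2) := by
  obtain ⟨N, hN⟩ := ((Real.tendsto_sum_range_one_div_nat_succ_atTop.eventually_ge_atTop
    (8 * M)).and (Filter.eventually_ge_atTop 1)).exists
  refine ⟨N, hN.2, ?_⟩
  have h1 := hN.1
  have h2 : ∑ i ∈ Finset.range N, 1 / ((i : ℝ) + 1) = ∑ i ∈ Finset.Icc 1 N, 1 / (i : ℝ) := by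
    rw [Finset.range_eq_Ico, ← Finset.Ico_add_one_right_eq_Icc,
      ← Finset.sum_Ico_add' (fun i : ℕ => 1 / (i : ℝ)) 0 N 1]
    simp
  rw [h2] at h1
  rw [Finset.sum_product]
  have h3 : ∑ i ∈ Finset.Icc 1 N, (1 / 8) * (1 / (i : ℝ)) ≤ ∑ i ∈ Finset.Icc 1 N,
      ∑ j ∈ Finset.Icc 1 N, 1 / (((i : ℝ) + 1) ^ 2 + ((j : ℝ) + 1) ^ 2) := by
    refine Finset.sum_le_sum fun i hi => ?_
    rw [Finset.mem_Icc] at hi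
    have hi1 : (1 : ℝ) ≤ i := by exact_mod_cast hi.1
    calc (1 / 8) * (1 / (i : ℝ)) = ∑ j ∈ Finset.Icc 1 i, 1 / (8 * (i : ℝ) ^ 2) := by
          simp; field_simp
      _ ≤ ∑ j ∈ Finset.Icc 1 i, 1 / (((i : ℝ) + 1) ^ 2 + ((j : ℝ) + 1) ^ 2) := by
          refine Finset.sum_le_sum fun j hj => ?_
          rw [Finset.mem_Icc] at hj
          have hj1 : (j : ℝ) ≤ i := by exact_mod_cast hj.2
          have hj0 : (1 : ℝ) ≤ j := by exact_mod_cast hj.1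
          apply one_div_le_one_div_of_le (by positivity)
          nlinarith
      _ ≤ _ := Finset.sum_le_sum_of_subset_of_nonneg
          (Finset.Icc_subset_Icc le_rfl hi.2) (fun _ _ _ => by positivity)
  rw [← Finset.mul_sum] at h3
  linarith

/-- A good finite family of disks. -/
def GoodF (G : Finset (ℂ × ℝ)) : Prop :=
  (∀ d ∈ G, 0 < d.2 ∧ ‖d.1‖ + d.2 < 1) ∧ ∀ d ∈ G, ∀ e ∈ G, d ≠ e → d.2 + e.2 < dist d.1 e.1

/-- The weight of a disk. -/
noncomputable def wt (d : ℂ × ℝ) : ℝ := d.2 / (1 - ‖d.1‖ - d.2) ^ 2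

/-- Complement of the open disks of a family. -/
def offs (G : Finset (ℂ × ℝ)) : Set ℂ := {z | ∀ d ∈ G, d.2 ≤ dist z d.1}

lemma gap (G : Finset (ℂ × ℝ)) (hG : GoodF G) : ∃ ρ > 0, ∀ d ∈ G, ∀ e ∈ G, d ≠ e →
    d.2 + e.2 + 4 * ρ ≤ dist d.1 e.1 := by
  have : ∀ p ∈ G ×ˢ G, ∀ᶠ ρ in nhdsWithin (0 : ℝ) (Ioi 0), p.1 ≠ p.2 →
      p.1.2 + p.2.2 + 4 * ρ ≤ dist p.1.1 p.2.1 := by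
    intro p hp
    rw [Finset.mem_product] at hp
    by_cases hne : p.1 = p.2
    · simp [hne]
    have h1 := hG.2 _ hp.1 _ hp.2 hne
    have hpos : 0 < (dist p.1.1 p.2.1 - (p.1.2 + p.2.2)) / 4 := by linarith
    filter_upwards [Ioo_mem_nhdsGT hpos] with ρ hρ _
    linarith [hρ.2]
  have h2 := (Filter.eventually_all_finset (G ×ˢ G)).mpr this
  obtain ⟨ρ, h3, h4⟩ := (h2.and self_mem_nhdsWithin).exists
  exact ⟨ρ, h4, fun d hd e he => h3 (d, e) (Finset.mk_mem_product hd he)⟩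

lemma quadrant (G : Finset (ℂ × ℝ)) (ρ : ℝ) (hG : ∀ d ∈ G, 0 < d.2)
    (hgap : ∀ d ∈ G, ∀ e ∈ G, d ≠ e → d.2 + e.2 + 4 * ρ ≤ dist d.1 e.1)
    (x : ℂ) (hx : x ∈ offs G) : ∃ σ τ : ℤ, (σ = 1 ∨ σ = -1) ∧ (τ = 1 ∨ τ = -1) ∧
      ∀ z : ℂ, 0 ≤ σ * (z - x).re → 0 ≤ τ * (z - x).im → dist z x ≤ ρ →
        ∀ d ∈ G, d.2 + ρ ≤ dist z d.1 ∨ d.2 ^ 2 + dist z x ^ 2 ≤ dist z d.1 ^ 2 := by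
  by_cases hnear : ∃ e ∈ G, dist x e.1 < e.2 + 2 * ρ
  · obtain ⟨e, he, hxe⟩ := hnear
    have hs : ∀ t : ℝ, ∃ σ : ℤ, (σ = 1 ∨ σ = -1) ∧ ∀ u : ℝ, 0 ≤ σ * u → 0 ≤ u * t := by
      intro t
      rcases le_total 0 t with h | h
      · exact ⟨1, Or.inl rfl, fun u hu => by
          simp at hu; exact mul_nonneg hu h⟩
      · exact ⟨-1, Or.inr rfl, fun u hu => by
          simp at hu; exact mul_nonneg_of_nonpos_of_nonpos hu h⟩
    obtain ⟨σ, h1, h2⟩ := hs (x - e.1).re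
    obtain ⟨τ, h3, h4⟩ := hs (x - e.1).im
    refine ⟨σ, τ, h1, h3, fun z hz1 hz2 hzx d hd => ?_⟩
    by_cases hde : d = e
    · right
      subst hde
      have h5 := h2 _ hz1
      have h6 := h4 _ hz2
      have h7 := hx d hd
      have h8 : d.2 ^ 2 ≤ dist x d.1 ^ 2 := by
        have := hG d hd
        gcongr
      simp only [Complex.dist_eq, ← Complex.normSq_eq_norm_sq, Complex.normSq_apply,
        Complex.sub_re, Complex.sub_im] at *
      nlinarith
    · left
      have h5 := hgap d hd e he hde
      have h6 := dist_triangle d.1 z e.1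
      have h7 := dist_triangle z x e.1
      rw [dist_comm d.1 z] at h6
      linarith
  · push Not at hnear
    refine ⟨1, 1, Or.inl rfl, Or.inl rfl, fun z _ _ hzx d hd => Or.inl ?_⟩
    have h5 := hnear d hd
    have h7 := dist_triangle x z d.1
    rw [dist_comm x z] at h7
    linarith

lemma corner (h t : ℝ) (hh : 0 < h) (σ : ℤ) (hσ : σ = 1 ∨ σ = -1) : ∃ p : ℤ, ∀ i : ℕ,
    h * i ≤ σ * (h * ((p + σ * i : ℤ) : ℝ) - t) ∧
      σ * (h * ((p + σ * i : ℤ) : ℝ) - t) ≤ h * (i + 1) := by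
  rcases hσ with rfl | rfl
  · refine ⟨⌈t / h⌉, fun i => ?_⟩
    have h1 := Int.le_ceil (t / h)
    have h2 := Int.ceil_lt_add_one (t / h)
    rw [div_le_iff₀ hh] at h1
    have h3 : ((⌈t / h⌉ : ℝ)) * h < t + h := by
      have := mul_lt_mul_of_pos_right h2 hh
      field_simp at this
      linarith
    push_cast
    constructor <;> nlinarith
  · refine ⟨⌊t / h⌋, fun i => ?_⟩
    have h1 := Int.floor_le (t / h)
    have h2 := Int.lt_floor_add_one (t / h)
    rw [le_div_iff₀ hh] at h1
    rw [div_lt_iff₀ hh] at h2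
    push_cast
    constructor <;> nlinarith

lemma gpt_sep (h : ℝ) (hh : 0 < h) (v w : ℤ × ℤ) (hvw : v ≠ w) :
    h ≤ dist (gpt h v) (gpt h w) := by
  rw [Complex.dist_eq]
  have key : ∀ p q : ℤ, p ≠ q → h ≤ |h * (p : ℝ) - h * q| := by
    intro p q hpq
    have : (1 : ℝ) ≤ |(p : ℝ) - q| := by
      exact_mod_cast Int.one_le_abs (sub_ne_zero.mpr hpq)
    rw [← mul_sub, abs_mul, abs_of_pos hh]
    nlinarith
  by_cases h1 : v.1 = w.1
  · have h2 : v.2 ≠ w.2 := fun h2 => hvw (Prod.ext h1 h2)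
    exact (key _ _ h2).trans (Complex.abs_im_le_norm (gpt h v - gpt h w))
  · exact (key _ _ h1).trans (Complex.abs_re_le_norm (gpt h v - gpt h w))

set_option maxHeartbeats 4000000 in
lemma stage (G : Finset (ℂ × ℝ)) (hG : GoodF G) (η : ℝ) (hη : 0 < η) (hη1 : η ≤ 1) (M B : ℝ)
    (hB : ∑ d ∈ G, wt d < B) : ∃ G' : Finset (ℂ × ℝ), G ⊆ G' ∧ GoodF G' ∧
      ∑ d ∈ G', wt d < B ∧ ∀ x : ℂ, ‖x‖ ≤ 1 - η → x ∈ offs G' → RatTest (offs G') x M := by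
  classical
  obtain ⟨ρ0, hρ0, hgap0⟩ := gap G hG
  set W := ∑ d ∈ G, wt d with hW
  obtain ⟨ε, hε, hε4, hεB⟩ : ∃ ε : ℝ, 0 < ε ∧ ε ≤ 1 / 4 ∧ 400 * ε / η ^ 2 < B - W := by
    refine ⟨min (1 / 4) ((B - W) * η ^ 2 / 800), ?_, min_le_left _ _, ?_⟩
    · have : 0 < B - W := by linarith
      positivity
    · have h0 : 0 < B - W := by linarith
      have h1 := min_le_right (1 / 4) ((B - W) * η ^ 2 / 800)
      rw [div_lt_iff₀ (by positivity)]
      have : 0 < (B - W) * η ^ 2 := by positivity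
      linarith
  obtain ⟨ρ, hρ, hρη, hgap⟩ : ∃ ρ > 0, ρ ≤ η / 4 ∧ ∀ d ∈ G, ∀ e ∈ G, d ≠ e →
      d.2 + e.2 + 4 * ρ ≤ dist d.1 e.1 := by
    refine ⟨min ρ0 (η / 4), by positivity, min_le_right _ _, fun d hd e he hde => ?_⟩
    have := hgap0 d hd e he hde
    linarith [min_le_left ρ0 (η / 4)]
  obtain ⟨N, hN1, hN⟩ := quad_sum (M / ε)
  have hNr : (1 : ℝ) ≤ N := by exact_mod_cast hN1
  obtain ⟨h, hh, hhN⟩ : ∃ h : ℝ, 0 < h ∧ h * (4 * (N + 1)) = ρ :=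
    ⟨ρ / (4 * (N + 1)), by positivity, by field_simp⟩
  have hh1 : h ≤ 1 / 32 := by nlinarith
  have hhρ : h < ρ := by nlinarith
  obtain ⟨r, hr⟩ : ∃ r : ℝ, r = ε * h ^ 2 := ⟨_, rfl⟩
  have hr0 : 0 < r := by rw [hr]; positivity
  have hrh : r ≤ h / 4 := by
    rw [hr]; nlinarith [mul_le_mul hε4 (show h ^ 2 ≤ h by nlinarith) (by positivity) (by norm_num)]
  have hrh2 : r ≤ h ^ 2 / 4 := by rw [hr]; nlinarith [sq_nonneg h]
  obtain ⟨L, hL⟩ : ∃ L : ℤ, L = ⌈1 / h⌉ := ⟨_, rfl⟩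
  have hL1 : 1 / h ≤ (L : ℝ) := by rw [hL]; exact Int.le_ceil _
  have hL2 : (L : ℝ) ≤ 1 / h + 1 := by rw [hL]; exact (Int.ceil_lt_add_one _).le
  have hL0 : 0 ≤ L := by
    have : (0 : ℝ) ≤ L := le_trans (by positivity) hL1
    exact_mod_cast this
  set New : Finset (ℤ × ℤ) := (Finset.Icc (-L) L ×ˢ Finset.Icc (-L) L).filter
    (fun v => ‖gpt h v‖ ≤ 1 - η / 2 ∧ ∀ d ∈ G, d.2 + r < dist (gpt h v) d.1) with hNew
  have hcard : (New.card : ℝ) ≤ 25 / h ^ 2 := by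
    have h1 : New.card ≤ (Finset.Icc (-L) L ×ˢ Finset.Icc (-L) L).card := Finset.card_filter_le _ _
    rw [Finset.card_product, Int.card_Icc] at h1
    have h2 : (((L + 1 - -L).toNat : ℕ) : ℝ) ≤ 5 / h := by
      have h3 : (((L + 1 - -L).toNat : ℕ) : ℝ) = ((L + 1 - -L : ℤ) : ℝ) := by
        have : (((L + 1 - -L).toNat : ℕ) : ℤ) = L + 1 - -L := Int.toNat_of_nonneg (by omega)
        exact_mod_cast this
      rw [h3]
      push_cast
      have h4 : 1 ≤ 1 / h := by rw [le_div_iff₀ hh]; linarith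
      have h5 : 5 / h = 5 * (1 / h) := by ring
      rw [h5]; linarith
    calc (New.card : ℝ) ≤ (((L + 1 - -L).toNat * (L + 1 - -L).toNat : ℕ) : ℝ) := by
          exact_mod_cast h1
      _ ≤ (5 / h) * (5 / h) := by push_cast; gcongr
      _ = 25 / h ^ 2 := by ring
  have hmemNew : ∀ v, ‖gpt h v‖ ≤ 1 - η / 2 → (∀ d ∈ G, d.2 + r < dist (gpt h v) d.1) →
      v ∈ New := by
    intro v h1 h2
    have key : ∀ p : ℤ, |h * (p : ℝ)| ≤ 1 → p ∈ Finset.Icc (-L) L := by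
      intro p hp
      rw [Finset.mem_Icc, ← abs_le]
      rw [abs_mul, abs_of_pos hh] at hp
      have : |(p : ℝ)| ≤ 1 / h := by rw [le_div_iff₀ hh]; linarith
      exact_mod_cast this.trans hL1
    rw [hNew, Finset.mem_filter, Finset.mem_product]
    refine ⟨⟨key _ ?_, key _ ?_⟩, h1, h2⟩
    · exact (Complex.abs_re_le_norm (gpt h v)).trans (by linarith)
    · exact (Complex.abs_im_le_norm (gpt h v)).trans (by linarith)
  set I : Finset (ℂ × ℝ) := New.image (fun v => (gpt h v, r)) with hI
  have hIm : ∀ d ∈ I, ∃ v, d = (gpt h v, r) ∧ ‖gpt h v‖ ≤ 1 - η / 2 ∧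
      ∀ d ∈ G, d.2 + r < dist (gpt h v) d.1 := by
    intro d hd
    rw [hI, Finset.mem_image] at hd
    obtain ⟨v, hv, rfl⟩ := hd
    rw [hNew, Finset.mem_filter] at hv
    exact ⟨v, rfl, hv.2⟩
  have hIwt : ∑ d ∈ I, wt d ≤ 400 * ε / η ^ 2 := by
    have h1 : ∀ d ∈ I, wt d ≤ 16 * r / η ^ 2 := by
      intro d hd
      obtain ⟨v, rfl, hv, -⟩ := hIm d hd
      have h2 : η / 4 ≤ 1 - ‖gpt h v‖ - r := by linarith
      calc wt (gpt h v, r) ≤ r / (η / 4) ^ 2 := by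
            unfold wt
            dsimp only
            gcongr
        _ = 16 * r / η ^ 2 := by field_simp; norm_num
    have h2 : (I.card : ℝ) ≤ 25 / h ^ 2 :=
      le_trans (by exact_mod_cast Finset.card_image_le) hcard
    calc ∑ d ∈ I, wt d ≤ I.card • (16 * r / η ^ 2) := Finset.sum_le_card_nsmul _ _ _ h1
      _ = I.card * (16 * r / η ^ 2) := by simp
      _ ≤ 25 / h ^ 2 * (16 * r / η ^ 2) := by gcongr
      _ = 400 * ε / η ^ 2 := by rw [hr]; field_simp; norm_num
  refine ⟨G ∪ I, Finset.subset_union_left, ⟨?_, ?_⟩, ?_, ?_⟩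
  · intro d hd
    rcases Finset.mem_union.mp hd with hd | hd
    · exact hG.1 d hd
    · obtain ⟨v, rfl, hv, -⟩ := hIm d hd
      exact ⟨hr0, by dsimp only; linarith⟩
  · intro d hd e he hde
    rcases Finset.mem_union.mp hd with hd | hd <;> rcases Finset.mem_union.mp he with he | he
    · exact hG.2 d hd e he hde
    · obtain ⟨v, rfl, -, hv⟩ := hIm e he
      rw [dist_comm]; exact hv d hd
    · obtain ⟨v, rfl, -, hv⟩ := hIm d hd
      rw [add_comm]; exact hv e he
    · obtain ⟨v, rfl, -, -⟩ := hIm d hd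
      obtain ⟨w, rfl, -, -⟩ := hIm e he
      have hvw : v ≠ w := fun h => hde (by rw [h])
      have := gpt_sep h hh v w hvw
      dsimp only
      linarith
  · have hdisj : Disjoint G I := by
      rw [Finset.disjoint_left]
      intro d hd hdI
      obtain ⟨v, rfl, -, hv⟩ := hIm d hdI
      have := hv _ hd
      simp at this
      linarith
    rw [Finset.sum_union hdisj]
    linarith
  · intro x hx hxo
    have hxG : x ∈ offs G := fun d hd => hxo d (Finset.mem_union_left _ hd)
    obtain ⟨σ, τ, hσ, hτ, hq⟩ := quadrant G ρ (fun d hd => (hG.1 d hd).1) hgap x hxG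
    obtain ⟨p, hp⟩ := corner h x.re hh σ hσ
    obtain ⟨q, hq'⟩ := corner h x.im hh τ hτ
    set φ : ℕ × ℕ → ℤ × ℤ := fun v => (p + σ * v.1, q + τ * v.2) with hφ
    set s := Finset.Icc 1 N ×ˢ Finset.Icc 1 N with hs
    have hσ2 : (σ : ℝ) ^ 2 = 1 := by rcases hσ with rfl | rfl <;> norm_num
    have hτ2 : (τ : ℝ) ^ 2 = 1 := by rcases hτ with rfl | rfl <;> norm_num
    have hinj : Set.InjOn φ s := by
      intro v _ w _ hvw
      simp only [hφ, Prod.mk.injEq, add_right_inj] at hvw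
      obtain ⟨h1, h2⟩ := hvw
      apply Prod.ext
      · rcases hσ with rfl | rfl <;> omega
      · rcases hτ with rfl | rfl <;> omega
    have hbd : ∀ v ∈ s, h ≤ dist (gpt h (φ v)) x ∧ dist (gpt h (φ v)) x ≤ ρ ∧
        dist (gpt h (φ v)) x ^ 2 ≤ h ^ 2 * (((v.1 : ℝ) + 1) ^ 2 + ((v.2 : ℝ) + 1) ^ 2) ∧
        0 ≤ σ * (gpt h (φ v) - x).re ∧ 0 ≤ τ * (gpt h (φ v) - x).im := by
      intro v hv
      rw [hs, Finset.mem_product, Finset.mem_Icc, Finset.mem_Icc] at hv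
      have a1 : (1 : ℝ) ≤ v.1 := by exact_mod_cast hv.1.1
      have a2 : (v.1 : ℝ) ≤ N := by exact_mod_cast hv.1.2
      have a3 : (1 : ℝ) ≤ v.2 := by exact_mod_cast hv.2.1
      have a4 : (v.2 : ℝ) ≤ N := by exact_mod_cast hv.2.2
      have b1 := hp v.1
      have b2 := hq' v.2
      have e1 : (gpt h (φ v) - x).re = h * ((p + σ * v.1 : ℤ) : ℝ) - x.re := rfl
      have e2 : (gpt h (φ v) - x).im = h * ((q + τ * v.2 : ℤ) : ℝ) - x.im := rfl
      rw [← e1] at b1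
      rw [← e2] at b2
      have e3 : dist (gpt h (φ v)) x ^ 2 = (σ * (gpt h (φ v) - x).re) ^ 2 +
          (τ * (gpt h (φ v) - x).im) ^ 2 := by
        rw [Complex.dist_eq, ← Complex.normSq_eq_norm_sq, Complex.normSq_apply, mul_pow, mul_pow,
          hσ2, hτ2]
        ring
      have c1 : h ≤ σ * (gpt h (φ v) - x).re := by nlinarith
      have c2 : h ≤ τ * (gpt h (φ v) - x).im := by nlinarith
      have c3 : dist (gpt h (φ v)) x ^ 2 ≤ h ^ 2 * (((v.1 : ℝ) + 1) ^ 2 + ((v.2 : ℝ) + 1) ^ 2) := by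
        rw [e3, mul_add, ← mul_pow, ← mul_pow]
        have := b1.2
        have := b2.2
        gcongr
        · linarith
        · linarith
      refine ⟨?_, ?_, c3, by linarith, by linarith⟩
      · apply le_of_sq_le_sq _ dist_nonneg
        rw [e3]
        nlinarith
      · apply le_of_sq_le_sq _ hρ.le
        refine c3.trans ?_
        rw [← hhN, mul_pow]
        gcongr
        have : ((v.1 : ℝ) + 1) ^ 2 ≤ ((N : ℝ) + 1) ^ 2 := by gcongr
        have : ((v.2 : ℝ) + 1) ^ 2 ≤ ((N : ℝ) + 1) ^ 2 := by gcongr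
        nlinarith [sq_nonneg ((N : ℝ) + 1)]
    have hin : ∀ v ∈ s, (gpt h (φ v), r) ∈ G ∪ I := by
      intro v hv
      obtain ⟨b1, b2, -, b4, b5⟩ := hbd v hv
      apply Finset.mem_union_right
      rw [hI, Finset.mem_image]
      refine ⟨φ v, hmemNew _ ?_ ?_, rfl⟩
      · have : ‖gpt h (φ v)‖ ≤ dist (gpt h (φ v)) x + ‖x‖ := by
          have := dist_triangle (gpt h (φ v)) x 0
          simpa using this
        linarith
      · intro d hd
        rcases hq _ b4 b5 b2 d hd with h1 | h1
        · linarith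
        · have hd0 := hG.1 d hd
          have : d.2 < 1 := by linarith [norm_nonneg d.1]
          apply lt_of_pow_lt_pow_left₀ 2 dist_nonneg
          have : h ^ 2 ≤ dist (gpt h (φ v)) x ^ 2 := by gcongr
          nlinarith
    refine ⟨s, fun v => gpt h (φ v), fun v => r * (x - gpt h (φ v)) ^ 2 / (‖x - gpt h (φ v)‖ : ℂ) ^ 2,
      ?_, ?_, ?_⟩
    · intro v hv hmem
      have := hmem _ (hin v hv)
      simp at this
      linarith
    · intro z hz
      have h1 := grid_upper h r hh hr0 N hN1 (s.image φ)
        (Finset.card_image_le.trans (by simp [hs, sq])) z (by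
          intro w hw
          rw [Finset.mem_image] at hw
          obtain ⟨v, hv, rfl⟩ := hw
          have := hz _ (hin v hv)
          rwa [Complex.dist_eq] at this)
      rw [Finset.sum_image hinj] at h1
      have h2 : 18 * N * r / h ≤ 39 := by
        rw [div_le_iff₀ hh]; nlinarith
      refine (norm_sum_le _ _).trans (le_trans (Finset.sum_le_sum fun v hv => ?_) (h1.trans (by linarith)))
      have hne : ‖x - gpt h (φ v)‖ ≠ 0 := by
        have := (hbd v hv).1
        rw [dist_comm, Complex.dist_eq] at this
        linarith
      simp only [norm_div, norm_mul, norm_pow, Complex.norm_real, Real.norm_eq_abs, abs_norm,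
        abs_of_pos hr0]
      apply le_of_eq
      field_simp
    · have e : ∑ v ∈ s, r * (x - gpt h (φ v)) ^ 2 / (‖x - gpt h (φ v)‖ : ℂ) ^ 2 /
          (x - gpt h (φ v)) ^ 2 = ((∑ v ∈ s, r / ‖x - gpt h (φ v)‖ ^ 2 : ℝ) : ℂ) := by
        push_cast
        refine Finset.sum_congr rfl fun v hv => ?_
        have hne : ‖x - gpt h (φ v)‖ ≠ 0 := by
          have := (hbd v hv).1
          rw [dist_comm, Complex.dist_eq] at this
          linarith
        have hne2 : x - gpt h (φ v) ≠ 0 := norm_ne_zero_iff.mp hne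
        have hne3 : (‖x - gpt h (φ v)‖ : ℂ) ≠ 0 := by exact_mod_cast hne
        field_simp
      rw [e, Complex.norm_real, Real.norm_eq_abs]
      refine le_trans ?_ (le_abs_self _)
      rw [div_le_iff₀ hε, Finset.sum_mul] at hN
      refine hN.trans (Finset.sum_le_sum fun v hv => ?_)
      obtain ⟨b1, -, b3, -, -⟩ := hbd v hv
      rw [dist_comm, Complex.dist_eq] at b1 b3
      have hpos : 0 < ‖x - gpt h (φ v)‖ := by linarith
      calc _ = r / (h ^ 2 * (((v.1 : ℝ) + 1) ^ 2 + ((v.2 : ℝ) + 1) ^ 2)) := by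
            rw [hr]; field_simp
        _ ≤ _ := by gcongr

lemma enum (S : Set (ℂ × ℝ)) (hS : S.Countable) : ∃ g : ℕ → ℂ × ℝ, (∀ d ∈ S, ∃ n, g n = d) ∧
    (∀ n, g n ∈ S ∨ g n = (0, 0)) ∧ ∀ m n, g m ∈ S → (0, 0) ∉ S → g m = g n → m = n := by
  classical
  have : Countable S := hS
  let _ : Encodable S := Encodable.ofCountable S
  set g : ℕ → ℂ × ℝ := fun n => ((Encodable.decode₂ S n).map Subtype.val).getD (0, 0) with hg
  have key : ∀ n, (∃ d : S, Encodable.encode d = n ∧ g n = d) ∨ g n = (0, 0) := by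
    intro n
    cases hd : Encodable.decode₂ S n with
    | none => right; simp [hg, hd]
    | some d => left; exact ⟨d, Encodable.mem_decode₂.mp hd, by simp [hg, hd]⟩
  refine ⟨g, ?_, ?_, ?_⟩
  · intro d hd
    exact ⟨Encodable.encode (⟨d, hd⟩ : S), by simp [hg, Encodable.decode₂_encode]⟩
  · intro n
    rcases key n with ⟨d, -, h⟩ | h
    · left; rw [h]; exact d.2
    · right; exact h
  · intro m n hm h0 hmn
    rcases key m with ⟨d, h1, h2⟩ | h
    · rcases key n with ⟨e, h3, h4⟩ | h'
      · have : d = e := Subtype.ext (by rw [← h2, ← h4, hmn])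
        rw [← h1, ← h3, this]
      · rw [hmn, h'] at hm; exact absurd hm h0
    · rw [h] at hm; exact absurd hm h0

lemma outer_test (X : Set ℂ) (hX : X ⊆ closedBall 0 1) (x : ℂ) (hx : ‖x‖ = 1) (M : ℝ) :
    RatTest X x M := by
  obtain ⟨t, ht, htM⟩ : ∃ t : ℝ, 0 < t ∧ M ≤ 1 / t := by
    refine ⟨1 / (|M| + 1), by positivity, ?_⟩
    rw [one_div_one_div]; linarith [le_abs_self M]
  have hn : ‖((1 + t : ℝ) : ℂ) * x‖ = 1 + t := by
    rw [norm_mul, hx, Complex.norm_real, Real.norm_eq_abs, abs_of_pos (by linarith), mul_one]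
  refine ⟨{(0, 0)}, fun _ => ((1 + t : ℝ) : ℂ) * x, fun _ => (t : ℂ), ?_, ?_, ?_⟩
  · intro _ _ hmem
    have := hX hmem
    rw [mem_closedBall_zero_iff, hn] at this
    linarith
  · intro z hz
    have h1 := hX hz
    rw [mem_closedBall_zero_iff] at h1
    rw [Finset.sum_singleton, norm_div, Complex.norm_real, Real.norm_eq_abs, abs_of_pos ht]
    have h2 : t ≤ ‖z - ((1 + t : ℝ) : ℂ) * x‖ := by
      have := norm_sub_norm_le (((1 + t : ℝ) : ℂ) * x) z
      rw [norm_sub_rev, hn] at this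
      linarith
    exact (div_le_one_of_le₀ h2 (norm_nonneg _)).trans (by norm_num)
  · rw [Finset.sum_singleton, norm_div, norm_pow, Complex.norm_real, Real.norm_eq_abs,
      abs_of_pos ht]
    have : x - ((1 + t : ℝ) : ℂ) * x = -((t : ℂ) * x) := by push_cast; ring
    rw [this, norm_neg, norm_mul, hx, Complex.norm_real, Real.norm_eq_abs, abs_of_pos ht]
    refine htM.trans (le_of_eq ?_)
    field_simp

lemma RatTest.mono {Y Y' : Set ℂ} {x : ℂ} {M M' : ℝ} (h : RatTest Y x M) (hY : Y' ⊆ Y)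
    (hM : M' ≤ M) : RatTest Y' x M' := by
  obtain ⟨s, a, c, h1, h2, h3⟩ := h
  exact ⟨s, a, c, fun i hi hm => h1 i hi (hY hm), fun z hz => h2 z (hY hz), hM.trans h3⟩

lemma exists_seq (C : ℝ) (hC : 0 < C) : ∃ G : ℕ → Finset (ℂ × ℝ), Monotone G ∧
    (∀ k, GoodF (G k)) ∧ (∀ k, ∑ d ∈ G k, wt d < C) ∧
    ∀ (k : ℕ) (x : ℂ), ‖x‖ ≤ 1 - 1 / ((k : ℝ) + 1) → x ∈ offs (G (k + 1)) →
      RatTest (offs (G (k + 1))) x k := by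
  have st : ∀ (k : ℕ) (G : {G : Finset (ℂ × ℝ) // GoodF G ∧ ∑ d ∈ G, wt d < C}),
      ∃ G' : {G : Finset (ℂ × ℝ) // GoodF G ∧ ∑ d ∈ G, wt d < C}, G.1 ⊆ G'.1 ∧
      ∀ (x : ℂ), ‖x‖ ≤ 1 - 1 / ((k : ℝ) + 1) → x ∈ offs G'.1 → RatTest (offs G'.1) x k := by
    intro k G
    obtain ⟨G', h1, h2, h3, h4⟩ := stage G.1 G.2.1 (1 / ((k : ℝ) + 1)) (by positivity)
      (by rw [div_le_one (by positivity)]; linarith [Nat.cast_nonneg (α := ℝ) k]) k C G.2.2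
    exact ⟨⟨G', h2, h3⟩, h1, h4⟩
  choose F hF1 hF2 using st
  let G : ℕ → {G : Finset (ℂ × ℝ) // GoodF G ∧ ∑ d ∈ G, wt d < C} := fun n =>
    Nat.rec ⟨∅, ⟨by simp, by simp⟩, by simpa using hC⟩ (fun k G => F k G) n
  refine ⟨fun k => (G k).1, monotone_nat_of_le_succ fun k => hF1 k (G k), fun k => (G k).2.1,
    fun k => (G k).2.2, fun k => hF2 k (G k)⟩

/-- for each `C > 0` there is a classical abstract Swiss cheese `B` with
`b₀ = 0`, `s₀ = 1`, `𝕋 ⊆ X_B`, no non-zero bounded point derivations on `R(X_B)`, and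
`∑_{n ≥ 1} s_n/d_n² ≤ C`. -/
theorem stmt_18 (Cb : ℝ) (hCb : 0 < Cb) :
    ∃ B : SwissCheese, B.IsClassical ∧ B.a 0 = 0 ∧ B.r 0 = 1 ∧
      sphere (0 : ℂ) 1 ⊆ B.cheeseSet ∧
      (∀ (x : B.cheeseSet) (d : Rx B.cheeseSet →L[ℂ] ℂ), IsBPD B.cheeseSet x d → d = 0) ∧
      (Summable fun n => B.r (n + 1) / distT B n ^ 2) ∧
      (∑' n, B.r (n + 1) / distT B n ^ 2) ≤ Cb := by
  obtain ⟨G, hmono, hgood, hwt, htest⟩ := exists_seq Cb hCb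
  set S : Set (ℂ × ℝ) := ⋃ k, (G k : Set (ℂ × ℝ)) with hS
  have hSc : S.Countable := countable_iUnion fun k => (G k).countable_toSet
  obtain ⟨g, hg1, hg2, hg3⟩ := enum S hSc
  have hSmem : ∀ d, d ∈ S ↔ ∃ k, d ∈ G k := fun d => by simp [hS]
  have hSgood : ∀ d ∈ S, 0 < d.2 ∧ ‖d.1‖ + d.2 < 1 := by
    intro d hd
    obtain ⟨k, hk⟩ := (hSmem d).mp hd
    exact (hgood k).1 d hk
  have hS0 : ((0 : ℂ), (0 : ℝ)) ∉ S := fun h => lt_irrefl _ (hSgood _ h).1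
  have hpair : ∀ d ∈ S, ∀ e ∈ S, d ≠ e → d.2 + e.2 < dist d.1 e.1 := by
    intro d hd e he hde
    obtain ⟨k, hk⟩ := (hSmem d).mp hd
    obtain ⟨l, hl⟩ := (hSmem e).mp he
    exact (hgood (max k l)).2 d (hmono (le_max_left k l) hk) e (hmono (le_max_right k l) hl) hde
  have hpos : ∀ n, 0 < (g n).2 → g n ∈ S := by
    intro n hn
    rcases hg2 n with h | h
    · exact h
    · rw [h] at hn; exact absurd hn (lt_irrefl _)
  have hnn : ∀ n, 0 ≤ (g n).2 := by
    intro n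
    rcases hg2 n with h | h
    · exact (hSgood _ h).1.le
    · rw [h]
  have hwt0 : ∀ d ∈ S, 0 ≤ wt d := fun d hd => div_nonneg (hSgood d hd).1.le (sq_nonneg _)
  let B : SwissCheese :=
    { a := fun n => Nat.casesOn n 0 (fun m => (g m).1)
      r := fun n => Nat.casesOn n 1 (fun m => (g m).2)
      r_nonneg := fun n => by
        cases n with
        | zero => exact zero_le_one
        | succ m => exact hnn m }
  have hBa : ∀ n, B.a (n + 1) = (g n).1 := fun n => rfl
  have hBr : ∀ n, B.r (n + 1) = (g n).2 := fun n => rfl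
  -- weights
  have hdist : ∀ n, 0 < (g n).2 → 1 - ‖(g n).1‖ - (g n).2 ≤ distT B n := by
    intro n hn
    unfold distT
    rw [hBr, hBa, if_pos hn]
    unfold distToCircle
    apply le_csInf
    · exact ⟨_, (g n).1, mem_ball_self hn, 1, by simp, rfl⟩
    · rintro _ ⟨z, hz, w, hw, rfl⟩
      rw [mem_sphere_zero_iff_norm] at hw
      rw [mem_ball] at hz
      have h1 := dist_triangle w z 0
      have h2 := dist_triangle z (g n).1 0
      rw [dist_zero_right, dist_zero_right, hw, dist_comm w z] at h1
      rw [dist_zero_right, dist_zero_right] at h2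
      linarith
  have hterm0 : ∀ n, 0 ≤ B.r (n + 1) / distT B n ^ 2 := fun n =>
    div_nonneg (hnn n) (sq_nonneg _)
  have hterm : ∀ n, 0 < (g n).2 → B.r (n + 1) / distT B n ^ 2 ≤ wt (g n) := by
    intro n hn
    have h1 := (hSgood _ (hpos n hn)).2
    have h2 := hdist n hn
    have h3 : 0 < 1 - ‖(g n).1‖ - (g n).2 := by linarith
    rw [hBr]
    unfold wt
    gcongr
  have hgen : ∀ u : Finset ℕ, ∑ n ∈ u.filter (fun n => 0 < (g n).2), wt (g n) ≤ Cb := by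
    intro u
    classical
    have hex : ∀ v : Finset ℕ, (∀ n ∈ v, g n ∈ S) → ∃ k, ∀ n ∈ v, g n ∈ G k := by
      intro v
      induction v using Finset.induction_on with
      | empty => intro _; exact ⟨0, by simp⟩
      | insert a v _ ih =>
        intro hv
        obtain ⟨k, hk⟩ := ih fun n hn => hv n (Finset.mem_insert_of_mem hn)
        obtain ⟨l, hl⟩ := (hSmem _).mp (hv a (Finset.mem_insert_self _ _))
        refine ⟨max k l, fun n hn => ?_⟩
        rcases Finset.mem_insert.mp hn with rfl | hn
        · exact hmono (le_max_right k l) hl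
        · exact hmono (le_max_left k l) (hk n hn)
    have hv : ∀ n ∈ u.filter (fun n => 0 < (g n).2), g n ∈ S := fun n hn =>
      hpos n (Finset.mem_filter.mp hn).2
    obtain ⟨k, hk⟩ := hex _ hv
    have hinj : Set.InjOn g (u.filter (fun n => 0 < (g n).2)) := fun m hm n _ hmn =>
      hg3 m n (hv m hm) hS0 hmn
    rw [← Finset.sum_image (f := wt) hinj]
    refine le_trans (Finset.sum_le_sum_of_subset_of_nonneg ?_ ?_) (hwt k).le
    · intro d hd
      obtain ⟨n, hn, rfl⟩ := Finset.mem_image.mp hd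
      exact hk n hn
    · intro d hd _
      exact hwt0 d ((hSmem d).mpr ⟨k, hd⟩)
  have hsumgen : ∀ f : ℕ → ℝ, (∀ n, (g n).2 = 0 → f n = 0) →
      (∀ n, 0 < (g n).2 → f n ≤ wt (g n)) → ∀ u : Finset ℕ, ∑ n ∈ u, f n ≤ Cb := by
    intro f h0 h1 u
    refine le_trans ?_ (hgen u)
    rw [Finset.sum_filter]
    refine Finset.sum_le_sum fun n _ => ?_
    split_ifs with hn
    · exact h1 n hn
    · exact (h0 n (le_antisymm (not_lt.mp hn) (hnn n))).le
  have hbound : ∀ u : Finset ℕ, ∑ n ∈ u, B.r (n + 1) / distT B n ^ 2 ≤ Cb :=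
    hsumgen _ (fun n hn => by rw [hBr, hn, zero_div]) hterm
  have hrad : ∀ u : Finset ℕ, ∑ n ∈ u, B.r (n + 1) ≤ Cb := by
    refine hsumgen _ (fun n hn => by rw [hBr, hn]) (fun n hn => ?_)
    have h1 := (hSgood _ (hpos n hn)).2
    have h3 : 0 < 1 - ‖(g n).1‖ - (g n).2 := by linarith
    have h4 : 1 - ‖(g n).1‖ - (g n).2 ≤ 1 := by linarith [norm_nonneg (g n).1]
    rw [hBr]
    unfold wt
    rw [le_div_iff₀ (by positivity)]
    have : (1 - ‖(g n).1‖ - (g n).2) ^ 2 ≤ 1 := pow_le_one₀ h3.le h4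
    nlinarith
  have hXoff : ∀ k, B.cheeseSet ⊆ offs (G k) := by
    intro k z hz d hd
    obtain ⟨n, hn⟩ := hg1 d ((hSmem d).mpr ⟨k, hd⟩)
    by_contra hlt
    apply hz.2
    simp only [mem_iUnion]
    refine ⟨n + 1, by simp, ?_⟩
    rw [hBa, hBr, hn, mem_ball]
    exact not_le.mp hlt
  have hXball : B.cheeseSet ⊆ closedBall 0 1 := fun z hz => hz.1
  refine ⟨B, ⟨summable_of_sum_le (fun n => hnn n) hrad, one_pos, ?_⟩, rfl, rfl, ?_, ?_,
    summable_of_sum_le hterm0 hbound, Real.tsum_le_of_sum_le hterm0 hbound⟩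
  · rintro k ⟨hk1, hk⟩
    obtain ⟨k, rfl⟩ : ∃ m, k = m + 1 := ⟨k - 1, by omega⟩
    rw [hBr] at hk
    have hkS := hpos k hk
    constructor
    · rw [hBa, hBr]
      change closedBall (g k).1 (g k).2 ⊆ ball 0 1
      intro z hz
      rw [mem_closedBall] at hz
      rw [mem_ball]
      have h1 := (hSgood _ hkS).2
      have h2 := dist_triangle z (g k).1 0
      rw [dist_zero_right (g k).1] at h2
      linarith
    · rintro l ⟨hl1, hl⟩ hlk
      obtain ⟨l, rfl⟩ : ∃ m, l = m + 1 := ⟨l - 1, by omega⟩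
      rw [hBr] at hl
      have hne : g k ≠ g l := fun h => hlk (by rw [hg3 k l hkS hS0 h])
      rw [hBa, hBr, hBa, hBr]
      exact (closedBall_disjoint_closedBall (hpair _ hkS _ (hpos l hl) hne)).inter_eq
  · intro z hz
    rw [mem_sphere_zero_iff_norm] at hz
    refine ⟨?_, ?_⟩
    · change z ∈ closedBall 0 1
      rw [mem_closedBall_zero_iff]; exact hz.le
    · simp only [mem_iUnion, not_exists]
      intro n hn hmem
      obtain ⟨n, rfl⟩ : ∃ m, n = m + 1 := ⟨n - 1, by have : 1 ≤ n := hn; omega⟩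
      rw [hBa, hBr, mem_ball] at hmem
      have h1 := (hSgood _ (hpos n (dist_nonneg.trans_lt hmem))).2
      have h2 := dist_triangle z (g n).1 0
      rw [dist_zero_right, dist_zero_right, hz] at h2
      linarith
  · intro x d hd
    refine bpd_zero _ x (fun M => ?_) d hd
    have hx1 : ‖(x : ℂ)‖ ≤ 1 := by
      have := hXball x.2
      rwa [mem_closedBall_zero_iff] at this
    rcases hx1.eq_or_lt with hx | hx
    · exact outer_test _ hXball x hx M
    · have hp : 0 < 1 - ‖(x : ℂ)‖ := by linarith
      obtain ⟨k1, hk1⟩ := exists_nat_one_div_lt hp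
      obtain ⟨k2, hk2⟩ := exists_nat_ge M
      have h1 : 1 / (((max k1 k2 : ℕ) : ℝ) + 1) ≤ 1 / ((k1 : ℝ) + 1) := by
        apply one_div_le_one_div_of_le (by positivity)
        have : (k1 : ℝ) ≤ ((max k1 k2 : ℕ) : ℝ) := by exact_mod_cast le_max_left k1 k2
        linarith
      have h2 : (k2 : ℝ) ≤ ((max k1 k2 : ℕ) : ℝ) := by exact_mod_cast le_max_right k1 k2
      exact (htest (max k1 k2) x (by linarith) (hXoff _ x.2)).mono (hXoff _) (hk2.trans h2)
end
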